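/- Let q be a prime power with q > 2 and let S be an algebraic hypersurface of PG(6,q^2) of degree q+1 defined over GF(q^2), not containing any solid, with exactly q^11 + q^9 + q^7 + q^4 + q^2 + 1 rational points, and suppose there exists a solid Sigma_3 with |S ∩ Sigma_3| = q^4 + q^2 + 1. Then every hyperplane of PG(6,q^2) meets S either in a non-singular Hermitian variety H(5,q^2) or in a Hermitian cone with vertex a point over a non-singular Hermitian variety H(4,q^2). -/

import Mathlib

open MvPolynomial Module

/-- The set of points of the projective subspace of `PG(n-1, F)` determined by
the linear subspace `W` of `F^n`. -/
def projPts {F : Type} [Field F] {n : ℕ} (W : Submodule F (Fin n → F)) :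
    Set (Projectivization F (Fin n → F)) :=
  {P | P.submodule ≤ W}

/-- The set of `F`-rational points of the hypersurface of `PG(n-1, F)` defined by the
homogeneous polynomial `f`. -/
def hypersurfacePts {F : Type} [Field F] {n : ℕ} (f : MvPolynomial (Fin n) F) :
    Set (Projectivization F (Fin n → F)) :=
  {P | MvPolynomial.eval P.rep f = 0}


/-- `η` is a Hermitian (sesquilinear) form with respect to the involution `x ↦ x^q`:
additive in each argument, `F`-linear in the first, with `η w v = (η v w)^q`. -/
def IsHermitianForm (q : ℕ) {F : Type} [Field F] {V : Type} [AddCommGroup V] [Module F V]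
    (η : V → V → F) : Prop :=
  (∀ u v w, η (u + v) w = η u w + η v w) ∧
  (∀ u v w, η u (v + w) = η u v + η u w) ∧
  (∀ (a : F) (v w : V), η (a • v) w = a * η v w) ∧
  (∀ v w, η w v = (η v w) ^ q)

/-- The radical of the form `η` restricted to the subspace `W` has dimension `k`. -/
def HasRadicalDimOn {F : Type} [Field F] {n : ℕ}
    (η : (Fin n → F) → (Fin n → F) → F) (W : Submodule F (Fin n → F)) (k : ℕ) : Prop :=
  ∃ R : Submodule F (Fin n → F), R ≤ W ∧ Module.finrank F R = k ∧
    ∀ v ∈ W, (v ∈ R ↔ ∀ w ∈ W, η v w = 0)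

/-- `X` is the Hermitian variety of the projective subspace determined by `W` cut out by a
Hermitian form whose radical on `W` has dimension `k` (a non-singular Hermitian variety
if `k = 0`, a Hermitian cone with vertex of projective dimension `k - 1` otherwise). -/
def IsHermitianConeOn (q : ℕ) {F : Type} [Field F] {n : ℕ}
    (W : Submodule F (Fin n → F)) (k : ℕ)
    (X : Set (Projectivization F (Fin n → F))) : Prop :=
  ∃ η : (Fin n → F) → (Fin n → F) → F, IsHermitianForm q η ∧
    HasRadicalDimOn η W k ∧
    X = {P | P.submodule ≤ W ∧ η P.rep P.rep = 0}


/-- two polynomials of small degree agreeing on nonzero elements are equal -/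
theorem h13_poly_zero {F : Type} [Field F] [Fintype F] (P : Polynomial F)
    (hd : P.natDegree + 1 < Fintype.card F) (h : ∀ s : F, s ≠ 0 → P.eval s = 0) : P = 0 := by
  classical
  apply Polynomial.eq_zero_of_natDegree_lt_card_of_eval_eq_zero' P (Finset.univ.erase 0)
  · intro i hi
    exact h i (Finset.ne_of_mem_erase hi)
  · rw [Finset.card_erase_of_mem (Finset.mem_univ _), Finset.card_univ]
    omega

theorem h13_poly_eq {F : Type} [Field F] [Fintype F] (P R : Polynomial F) (d : ℕ)
    (hd : d + 1 < Fintype.card F) (hP : P.natDegree ≤ d) (hR : R.natDegree ≤ d)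
    (h : ∀ s : F, s ≠ 0 → P.eval s = R.eval s) : P = R := by
  have := h13_poly_zero (P - R) (by
    have := Polynomial.natDegree_sub_le P R
    have h2 : max P.natDegree R.natDegree ≤ d := max_le hP hR
    omega) (fun s hs => by simp [h s hs])
  exact sub_eq_zero.mp this

/-- the restriction of `f` to the line `v + s w` -/
noncomputable def h13_lin {F : Type} [Field F] {n : ℕ} (f : MvPolynomial (Fin n) F)
    (v w : Fin n → F) : Polynomial F :=
  MvPolynomial.aeval (fun i => Polynomial.C (v i) + Polynomial.C (w i) * Polynomial.X) f

theorem h13_lin_eval {F : Type} [Field F] {n : ℕ} (f : MvPolynomial (Fin n) F)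
    (v w : Fin n → F) (s : F) :
    (h13_lin f v w).eval s = MvPolynomial.eval (v + s • w) f := by
  unfold h13_lin
  rw [← Polynomial.coe_aeval_eq_eval, ← AlgHom.comp_apply, ← MvPolynomial.coe_aeval_eq_eval]
  have : ((Polynomial.aeval s).comp (MvPolynomial.aeval
      (fun i => Polynomial.C (v i) + Polynomial.C (w i) * Polynomial.X)) :
      MvPolynomial (Fin n) F →ₐ[F] F) = MvPolynomial.aeval (v + s • w) := by
    apply MvPolynomial.algHom_ext
    intro i
    simp
    ring
  exact congrArg (fun g => g f) this

theorem h13_lin_natDegree {F : Type} [Field F] {n : ℕ} (f : MvPolynomial (Fin n) F)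
    (v w : Fin n → F) (d : ℕ) (hd : f.totalDegree ≤ d) : (h13_lin f v w).natDegree ≤ d := by
  have := MvPolynomial.aeval_natDegree_le (n := 1) f hd
    (fun i => Polynomial.C (v i) + Polynomial.C (w i) * Polynomial.X) (fun i => by
      compute_degree)
  simpa [h13_lin] using this

theorem h13_lin_coeff_zero {F : Type} [Field F] {n : ℕ} (f : MvPolynomial (Fin n) F)
    (v w : Fin n → F) : (h13_lin f v w).coeff 0 = MvPolynomial.eval v f := by
  rw [Polynomial.coeff_zero_eq_eval_zero, h13_lin_eval]; simp

theorem h13_eval_smul {F : Type} [Field F] {n d : ℕ} {f : MvPolynomial (Fin n) F}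
    (hf : f.IsHomogeneous d) (s : F) (v : Fin n → F) :
    MvPolynomial.eval (s • v) f = s ^ d * MvPolynomial.eval v f := by
  rw [MvPolynomial.eval_eq, MvPolynomial.eval_eq, Finset.mul_sum]
  apply Finset.sum_congr rfl
  intro m hm
  have h1 := hf (MvPolynomial.mem_support_iff.mp hm)
  have h2 : ∏ i ∈ m.support, (s • v) i ^ m i = s ^ d * ∏ i ∈ m.support, v i ^ m i := by
    simp only [Pi.smul_apply, smul_eq_mul, mul_pow, Finset.prod_mul_distrib]
    congr 1
    rw [Finset.prod_pow_eq_pow_sum, ← h1]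
    simp [Finsupp.weight_apply, Finsupp.sum]
  rw [h2]; ring

/-- symmetry of the coefficients on the line spanned by `v` and `w` -/
theorem h13_lin_symm {F : Type} [Field F] [Fintype F] {n d : ℕ} {f : MvPolynomial (Fin n) F}
    (hf : f.IsHomogeneous d) (hd : d + 1 < Fintype.card F) (v w : Fin n → F) (j : ℕ)
    (hj : j ≤ d) : (h13_lin f v w).coeff j = (h13_lin f w v).coeff (d - j) := by
  have hdeg : f.totalDegree ≤ d := hf.totalDegree_le
  have h1 := h13_lin_natDegree f v w d hdeg
  have h2 := h13_lin_natDegree f w v d hdeg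
  have key : h13_lin f v w = (h13_lin f w v).reflect d := by
    apply h13_poly_eq _ _ d hd h1
    · refine (Polynomial.natDegree_reflect_le).trans ?_
      simp [h2]
    · intro s hs
      have : Invertible s⁻¹ := invertibleOfNonzero (inv_ne_zero hs)
      have h3 := Polynomial.eval₂_reflect_mul_pow (RingHom.id F) s⁻¹ d (h13_lin f w v) h2
      rw [invOf_eq_inv, inv_inv, ← Polynomial.eval, ← Polynomial.eval, h13_lin_eval] at h3
      rw [h13_lin_eval]
      have h4 : v + s • w = s • (w + s⁻¹ • v) := by
        rw [smul_add, smul_smul, mul_inv_cancel₀ hs, one_smul, add_comm]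
      rw [h4, h13_eval_smul hf, ← h3]
      rw [inv_pow]
      field_simp
  rw [key, Polynomial.coeff_reflect, Polynomial.revAt_le hj]


theorem h13_frob {F : Type} [Field F] [Fintype F] {q : ℕ}
    (hq : ∃ p k : ℕ, p.Prime ∧ 0 < k ∧ q = p ^ k) (hcard : Fintype.card F = q ^ 2) :
    ((q : F) = 0) ∧ ∃ φ : F →+* F, (∀ x, φ x = x ^ q) ∧ ∀ x, φ (φ x) = x := by
  obtain ⟨p, k, hp, hk, rfl⟩ := hq
  obtain ⟨r, hr⟩ := CharP.exists F
  obtain ⟨n, hrp, hn⟩ := FiniteField.card F r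
  have hpr : p = r := by
    rw [hcard, ← pow_mul] at hn
    have h1 : p ∣ r ^ (n : ℕ) := by
      rw [← hn]; exact dvd_pow_self p (by omega)
    exact (Nat.prime_dvd_prime_iff_eq hp hrp).mp (hp.dvd_of_dvd_pow h1)
  subst hpr
  have : Fact p.Prime := ⟨hp⟩
  refine ⟨?_, iterateFrobenius F p k, fun x => by simp [iterateFrobenius_def], fun x => ?_⟩
  · push_cast
    rw [CharP.cast_eq_zero, zero_pow (by omega)]
  · simp only [iterateFrobenius_def]
    rw [← pow_mul, ← sq, ← hcard, FiniteField.pow_card]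

theorem h13_K {F : Type} [Field F] [Fintype F] {q : ℕ} (hq3 : 3 ≤ q)
    (hcard : Fintype.card F = q ^ 2) (φ : F →+* F) (hφ : ∀ x, φ x = x ^ q)
    (P : Polynomial F) (hP : P.natDegree ≤ q + 1)
    (h : ∀ s : F, s ≠ 0 → φ (P.eval s) = P.eval s) :
    φ (P.coeff 0) = P.coeff 0 ∧ P.coeff q = φ (P.coeff 1) ∧
    ∀ i, 2 ≤ i → i < q → P.coeff i = 0 := by
  have hss : ∀ s : F, s ^ (q * q) = s := fun s => by
    rw [← sq, ← hcard, FiniteField.pow_card]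
  have hqq : q * q = q ^ 2 := by ring
  have hq9 : 3 * q ≤ q * q := Nat.mul_le_mul_right _ hq3
  set R : Polynomial F := (∑ i ∈ Finset.range q, Polynomial.C (φ (P.coeff i)) * Polynomial.X ^ (i * q))
    + Polynomial.C (φ (P.coeff q)) * Polynomial.X
    + Polynomial.C (φ (P.coeff (q+1))) * Polynomial.X ^ (q + 1) with hR
  have hRd : R.natDegree ≤ q * q - 2 := by
    rw [hR]
    refine Polynomial.natDegree_add_le_of_degree_le (Polynomial.natDegree_add_le_of_degree_le ?_ ?_) ?_
    · apply Polynomial.natDegree_sum_le_of_forall_le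
      intro i hi
      refine (Polynomial.natDegree_C_mul_X_pow_le _ _).trans ?_
      have : i * q ≤ (q - 1) * q := Nat.mul_le_mul_right _ (by have := Finset.mem_range.mp hi; omega)
      rw [Nat.sub_mul] at this
      omega
    · refine (Polynomial.natDegree_C_mul_le _ _).trans (Polynomial.natDegree_X_le.trans (by omega))
    · refine (Polynomial.natDegree_C_mul_X_pow_le _ _).trans (by omega)
  have hRP : R = P := by
    apply h13_poly_eq R P (q * q - 2) (by rw [hcard]; omega) hRd (hP.trans (by omega))
    intro s hs
    rw [← h s hs, Polynomial.eval_eq_sum_range' (p := P) (n := q + 2) (by omega), map_sum,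
      Finset.sum_range_succ, Finset.sum_range_succ, hR]
    simp only [Polynomial.eval_add, Polynomial.eval_finsetSum, Polynomial.eval_mul,
      Polynomial.eval_C, Polynomial.eval_pow, Polynomial.eval_X, map_mul, map_pow]
    congr 1
    · congr 1
      · apply Finset.sum_congr rfl
        intro i _
        rw [hφ s, ← pow_mul, mul_comm q i]
      · rw [hφ s, ← pow_mul, hss]
    · rw [hφ s, ← pow_mul, mul_add, pow_add s (q * q), hss]; ring
  have hc : ∀ n, P.coeff n = (∑ i ∈ Finset.range q, if n = i * q then φ (P.coeff i) else 0)
      + (if n = 1 then φ (P.coeff q) else 0) + (if n = q + 1 then φ (P.coeff (q+1)) else 0) := by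
    intro n
    conv_lhs => rw [← hRP, hR]
    simp only [Polynomial.coeff_add, Polynomial.finsetSum_coeff,
      Polynomial.coeff_C_mul, Polynomial.coeff_X]
    simp [eq_comm]
  refine ⟨?_, ?_, ?_⟩
  · have h0 := hc 0
    rw [Finset.sum_eq_single 0] at h0
    · rw [if_pos (by simp), if_neg (by omega), if_neg (by omega)] at h0
      simpa using h0.symm
    · intro b hb hb0
      rw [if_neg]
      intro h
      rcases Nat.mul_eq_zero.mp h.symm with h | h <;> omega
    · intro h; exfalso; apply h; simp; omega
  · rw [hc q, Finset.sum_eq_single 1]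
    · rw [if_pos (by ring), if_neg (by omega), if_neg (by omega)]; simp
    · intro b hb hb0
      rw [if_neg]
      intro h
      apply hb0
      have : b * q = 1 * q := by omega
      exact Nat.eq_of_mul_eq_mul_right (by omega) this
    · intro h; exfalso; apply h; simp; omega
  · intro i hi hiq
    rw [hc i, if_neg (by omega), if_neg (by omega), Finset.sum_eq_zero]
    · simp
    · intro b hb
      rw [if_neg]
      intro h
      rcases Nat.eq_zero_or_pos b with h0 | h0
      · subst h0; omega
      · have := Nat.mul_le_mul_right q h0
        omega


theorem h13_lin_coeff_one {F : Type} [Field F] {n : ℕ} (f : MvPolynomial (Fin n) F)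
    (v w : Fin n → F) :
    (h13_lin f v w).coeff 1 = ∑ i, w i * MvPolynomial.eval v (MvPolynomial.pderiv i f) := by
  induction f using MvPolynomial.induction_on with
  | C a => simp [h13_lin]
  | add p r hp hr =>
    have : h13_lin (p + r) v w = h13_lin p v w + h13_lin r v w := by simp [h13_lin]
    rw [this, Polynomial.coeff_add, hp, hr, ← Finset.sum_add_distrib]
    apply Finset.sum_congr rfl; intro i _
    simp; ring
  | mul_X p j hp =>
    have : h13_lin (p * MvPolynomial.X j) v w =
      h13_lin p v w * (Polynomial.C (v j) + Polynomial.C (w j) * Polynomial.X) := by simp [h13_lin]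
    rw [this, Polynomial.mul_coeff_one, hp, h13_lin_coeff_zero]
    simp only [Polynomial.coeff_add, Polynomial.coeff_C_zero, Polynomial.coeff_C_mul,
      Polynomial.coeff_X_one, Polynomial.coeff_X_zero, Derivation.leibniz, map_add, smul_eq_mul,
      map_mul, MvPolynomial.eval_X, MvPolynomial.pderiv_X, mul_add, Finset.sum_add_distrib]
    have h1 : ∑ x, w x * (MvPolynomial.eval v p * MvPolynomial.eval v
        ((Pi.single x 1 : Fin n → MvPolynomial (Fin n) F) j)) = w j * MvPolynomial.eval v p := by
      rw [Finset.sum_eq_single j]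
      · simp
      · intro b _ hb
        rw [Pi.single_eq_of_ne hb.symm]; simp
      · simp
    rw [h1]
    simp only [Polynomial.coeff_C, one_ne_zero, if_false, Finset.sum_mul, mul_one, mul_zero]
    simp only [if_true, add_zero, zero_add]
    rw [mul_comm]
    congr 1
    apply Finset.sum_congr rfl; intro i _; ring

theorem h13_herm {F : Type} [Field F] [Fintype F] {q n : ℕ} (hq3 : 3 ≤ q) (hq0 : (q : F) = 0)
    (hcard : Fintype.card F = q ^ 2) (φ : F →+* F) (hφ : ∀ x, φ x = x ^ q)
    (f : MvPolynomial (Fin n) F) (hf : f.IsHomogeneous (q + 1)) (e : F)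
    (he : ∀ v, φ (e * MvPolynomial.eval v f) = e * MvPolynomial.eval v f) :
    ∃ η : (Fin n → F) → (Fin n → F) → F, IsHermitianForm q η ∧
      ∀ v, η v v = e * MvPolynomial.eval v f := by
  have hq9 : 3 * q ≤ q * q := Nat.mul_le_mul_right _ hq3
  have hqc : q + 1 + 1 < Fintype.card F := by rw [hcard, sq]; omega
  have hlin1 : ∀ u v w : Fin n → F, (h13_lin f w (u + v)).coeff 1 =
      (h13_lin f w u).coeff 1 + (h13_lin f w v).coeff 1 := by
    intro u v w
    simp only [h13_lin_coeff_one, Pi.add_apply, add_mul, Finset.sum_add_distrib]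
  have hsym : ∀ v w : Fin n → F, e * (h13_lin f v w).coeff 1 = (e * (h13_lin f w v).coeff 1) ^ q := by
    intro v w
    have hK := h13_K hq3 hcard φ hφ (Polynomial.C e * h13_lin f w v)
      ((Polynomial.natDegree_C_mul_le _ _).trans (h13_lin_natDegree f w v _ hf.totalDegree_le))
      (by intro s _; simp only [Polynomial.eval_mul, Polynomial.eval_C, h13_lin_eval]; exact he _)
    have h2 := hK.2.1
    rw [Polynomial.coeff_C_mul, Polynomial.coeff_C_mul, hφ] at h2
    rw [h13_lin_symm hf hqc v w 1 (by omega), ← h2]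
    simp
  refine ⟨fun v w => e * (h13_lin f w v).coeff 1, ⟨?_, ?_, ?_, ?_⟩, ?_⟩
  · intro u v w
    simp only [hlin1, mul_add]
  · intro u v w
    simp only
    rw [hsym, hsym v u, hsym w u, ← hφ, ← hφ, ← hφ, ← map_add, hlin1, mul_add]
  · intro a v w
    simp only [h13_lin_coeff_one, Pi.smul_apply, smul_eq_mul, mul_assoc, ← Finset.mul_sum]
    ring
  · intro v w
    exact hsym v w
  · intro v
    simp only
    congr 1
    have hadd : ∀ s : F, (1 + s) ^ (q + 1) = 1 + s + s ^ q + s ^ (q + 1) := by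
      intro s
      have : (1 + s) ^ q = 1 + s ^ q := by rw [← hφ, map_add, map_one, hφ]
      rw [pow_succ, this]; ring
    have hP : h13_lin f v v = Polynomial.C (MvPolynomial.eval v f) *
        (1 + Polynomial.X + Polynomial.X ^ q + Polynomial.X ^ (q + 1)) := by
      apply h13_poly_eq _ _ (q + 1) hqc (h13_lin_natDegree f v v _ hf.totalDegree_le)
      · refine (Polynomial.natDegree_C_mul_le _ _).trans ?_
        compute_degree
      · intro s _
        rw [h13_lin_eval]
        have : v + s • v = (1 + s) • v := by rw [add_smul, one_smul]
        rw [this, h13_eval_smul hf, hadd]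
        simp
        ring
    rw [hP, Polynomial.coeff_C_mul]
    simp only [Polynomial.coeff_add, Polynomial.coeff_one, Polynomial.coeff_X_one,
      Polynomial.coeff_X_pow]
    rw [if_neg (by omega), if_neg (by omega), if_neg (by omega)]
    simp


theorem h13_hyper_decomp {F : Type} [Field F] (H : Submodule F (Fin 7 → F))
    (hH : Module.finrank F H = 6) :
    ∃ u : Fin 7 → F, ∀ w, ∃ h ∈ H, ∃ a : F, w = h + a • u := by
  have hlt : H < ⊤ := by
    rw [lt_top_iff_ne_top]
    rintro rfl
    simp at hH
  obtain ⟨u, -, hu⟩ := SetLike.exists_of_lt hlt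
  refine ⟨u, fun w => ?_⟩
  have hlt2 : H < H ⊔ Submodule.span F {u} := by
    rw [lt_iff_le_and_ne]
    refine ⟨le_sup_left, fun h => hu ?_⟩
    rw [h]
    exact Submodule.mem_sup_right (Submodule.mem_span_singleton_self u)
  have h7 := Submodule.finrank_lt_finrank_of_lt hlt2
  have htop : H ⊔ Submodule.span F {u} = ⊤ := by
    apply Submodule.eq_top_of_finrank_eq
    have := Submodule.finrank_le (H ⊔ Submodule.span F {u})
    simp at this ⊢
    omega
  have hw : w ∈ H ⊔ Submodule.span F {u} := by rw [htop]; trivial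
  obtain ⟨h, hh, y, hy, rfl⟩ := Submodule.mem_sup.mp hw
  obtain ⟨a, rfl⟩ := Submodule.mem_span_singleton.mp hy
  exact ⟨h, hh, a, rfl⟩

theorem h13_final {F : Type} [Field F] {q : ℕ} (hq3 : 3 ≤ q)
    (f : MvPolynomial (Fin 7) F) (e : F) (he : e ≠ 0)
    (η : (Fin 7 → F) → (Fin 7 → F) → F) (hη : IsHermitianForm q η)
    (hdiag : ∀ v, η v v = e * MvPolynomial.eval v f)
    (hnd : ∀ v, (∀ w, η v w = 0) → v = 0)
    (H : Submodule F (Fin 7 → F)) (hH : Module.finrank F H = 6) :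
    IsHermitianConeOn q H 0 (hypersurfacePts f ∩ projPts H) ∨
      IsHermitianConeOn q H 1 (hypersurfacePts f ∩ projPts H) := by
  obtain ⟨h1, h2, h3, h4⟩ := id hη
  have h0 : ∀ w, η 0 w = 0 := fun w => by
    have := h3 0 0 w
    simpa using this
  let R : Submodule F (Fin 7 → F) :=
    { carrier := {v | v ∈ H ∧ ∀ w ∈ H, η v w = 0}
      add_mem' := by
        rintro a b ⟨ha, ha'⟩ ⟨hb, hb'⟩
        exact ⟨H.add_mem ha hb, fun w hw => by rw [h1, ha' w hw, hb' w hw, add_zero]⟩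
      zero_mem' := ⟨H.zero_mem, fun w _ => h0 w⟩
      smul_mem' := by
        rintro c a ⟨ha, ha'⟩
        exact ⟨H.smul_mem c ha, fun w hw => by rw [h3, ha' w hw, mul_zero]⟩ }
  have hRmem : ∀ v, v ∈ R ↔ v ∈ H ∧ ∀ w ∈ H, η v w = 0 := fun v => Iff.rfl
  obtain ⟨u, hu⟩ := h13_hyper_decomp H hH
  let T : R →ₗ[F] F :=
    { toFun := fun v => η v.1 u
      map_add' := fun a b => by simp [h1]
      map_smul' := fun c a => by simp [h3] }
  have hT : Function.Injective T := by
    rw [← LinearMap.ker_eq_bot, LinearMap.ker_eq_bot']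
    rintro ⟨v, hv⟩ hTv
    have hvu : η v u = 0 := hTv
    have : v = 0 := by
      apply hnd
      intro w
      obtain ⟨h, hh, a, rfl⟩ := hu w
      rw [h2, ((hRmem v).mp hv).2 h hh, zero_add, h4 (a • u) v, h3, h4 v u, hvu]
      rw [zero_pow (by omega), mul_zero, zero_pow (by omega)]
    exact Subtype.ext this
  have hfr := LinearMap.finrank_le_finrank_of_injective hT
  rw [Module.finrank_self] at hfr
  have hcone : ∀ k, Module.finrank F R = k →
      IsHermitianConeOn q H k (hypersurfacePts f ∩ projPts H) := by
    intro k hk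
    refine ⟨η, hη, ⟨R, fun v hv => hv.1, hk, fun v hv => ?_⟩, ?_⟩
    · exact ⟨fun h => h.2, fun h => ⟨hv, h⟩⟩
    · ext P
      simp only [hypersurfacePts, projPts, Set.mem_inter_iff, Set.mem_setOf_eq, hdiag,
        mul_eq_zero, he, false_or]
      exact And.comm
  rcases Nat.le_one_iff_eq_zero_or_eq_one.mp hfr with h | h
  · exact Or.inl (hcone 0 h)
  · exact Or.inr (hcone 1 h)

/-- number of zero vectors of `f` in `W` -/
theorem h13_count {F : Type} [Field F] [Fintype F] {n d : ℕ}
    (f : MvPolynomial (Fin n) F) (hf : f.IsHomogeneous d) (hd : d ≠ 0)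
    (W : Submodule F (Fin n → F)) :
    Nat.card {v : Fin n → F // v ∈ W ∧ MvPolynomial.eval v f = 0} =
      1 + (Fintype.card F - 1) * (hypersurfacePts f ∩ projPts W).ncard := by
  classical
  let X := hypersurfacePts f ∩ projPts W
  have h00 : MvPolynomial.eval (0 : Fin n → F) f = 0 := by
    have := h13_eval_smul hf 0 0
    rw [zero_pow hd] at this
    simpa using this
  have hXmem : ∀ P : Projectivization F (Fin n → F), P ∈ X ↔
      MvPolynomial.eval P.rep f = 0 ∧ P.rep ∈ W := by
    intro P
    simp only [X, hypersurfacePts, projPts, Set.mem_inter_iff, Set.mem_setOf_eq]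
    rw [Projectivization.submodule_eq, Submodule.span_singleton_le_iff_mem]
  let g : Option (Fˣ × X) → {v : Fin n → F // v ∈ W ∧ MvPolynomial.eval v f = 0} := fun o =>
    match o with
    | none => ⟨0, W.zero_mem, h00⟩
    | some (a, P) => ⟨(a : F) • P.1.rep, W.smul_mem _ ((hXmem P.1).mp P.2).2, by
        rw [h13_eval_smul hf, ((hXmem P.1).mp P.2).1, mul_zero]⟩
  have hg : Function.Bijective g := by
    constructor
    · rintro (_ | ⟨a, P⟩) (_ | ⟨b, P'⟩) h
      · rfl
      · have := congrArg Subtype.val h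
        simp only [g] at this
        exact absurd this.symm (smul_ne_zero b.ne_zero P'.1.rep_nonzero)
      · have := congrArg Subtype.val h
        simp only [g] at this
        exact absurd this (smul_ne_zero a.ne_zero P.1.rep_nonzero)
      · have h1 := congrArg Subtype.val h
        simp only [g] at h1
        have hPP : P = P' := by
          apply Subtype.ext
          rw [← P.1.mk_rep, ← P'.1.mk_rep, Projectivization.mk_eq_mk_iff']
          refine ⟨(a⁻¹ : Fˣ) * b, ?_⟩
          rw [mul_smul, ← h1, smul_smul]
          simp
        subst hPP
        have hab : (a : F) = b := smul_left_injective F P.1.rep_nonzero h1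
        rw [Units.ext hab]
    · rintro ⟨v, hvW, hv⟩
      by_cases h0 : v = 0
      · exact ⟨none, Subtype.ext h0.symm⟩
      · obtain ⟨a, ha⟩ := Projectivization.exists_smul_eq_mk_rep F v h0
        have hrep : (Projectivization.mk F v h0).rep = (a : F) • v := ha.symm
        have hP : Projectivization.mk F v h0 ∈ X := by
          rw [hXmem, hrep]
          exact ⟨by rw [h13_eval_smul hf, hv, mul_zero], W.smul_mem _ hvW⟩
        refine ⟨some (a⁻¹, ⟨_, hP⟩), Subtype.ext ?_⟩
        simp only [g]
        rw [hrep, smul_smul]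
        simp
  rw [← Nat.card_congr (Equiv.ofBijective g hg), Finite.card_option, Nat.card_prod,
    Nat.card_eq_fintype_card (α := Fˣ), Fintype.card_units, add_comm]
  rfl


def h13_wt {R : Type*} [CommRing R] (deg : R → ℕ) (m : ℕ) (p : Polynomial R) : Prop :=
  ∀ i, p.coeff i ≠ 0 → deg (p.coeff i) + i ≤ m

theorem h13_wt_add {R : Type*} [CommRing R] (deg : R → ℕ)
    (hadd : ∀ a b, deg (a + b) ≤ max (deg a) (deg b)) (m : ℕ) (p r : Polynomial R)
    (hp : h13_wt deg m p) (hr : h13_wt deg m r) : h13_wt deg m (p + r) := by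
  intro i hi
  rw [Polynomial.coeff_add] at hi ⊢
  have h1 := hp i
  have h2 := hr i
  have h3 := hadd (p.coeff i) (r.coeff i)
  by_cases ha : p.coeff i = 0
  · rw [ha, zero_add] at hi ⊢; exact h2 hi
  · by_cases hb : r.coeff i = 0
    · rw [hb, add_zero] at hi ⊢; exact h1 hi
    · have := h1 ha; have := h2 hb
      rcases le_total (deg (p.coeff i)) (deg (r.coeff i)) with h | h
      · rw [max_eq_right h] at h3; omega
      · rw [max_eq_left h] at h3; omega

theorem h13_wt_CXG {R : Type*} [CommRing R] (deg : R → ℕ)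
    (hmul : ∀ a b, deg (a * b) ≤ deg a + deg b) (d k m : ℕ) (c : R) (G : Polynomial R)
    (hG : h13_wt deg d G) (hc : deg c + k + d ≤ m) :
    h13_wt deg m (Polynomial.C c * Polynomial.X ^ k * G) := by
  intro i hi
  rw [mul_assoc, Polynomial.coeff_C_mul, Polynomial.coeff_X_pow_mul'] at hi ⊢
  split_ifs at hi ⊢ with hk
  · have h1 : G.coeff (i - k) ≠ 0 := fun h => hi (by rw [h, mul_zero])
    have h2 := hG _ h1
    have h3 := hmul c (G.coeff (i - k))
    omega
  · simp at hi

theorem h13_wt_mod {R : Type*} [CommRing R] [Nontrivial R] (deg : R → ℕ)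
    (hadd : ∀ a b, deg (a + b) ≤ max (deg a) (deg b))
    (hneg : ∀ a, deg (-a) = deg a)
    (hmul : ∀ a b, deg (a * b) ≤ deg a + deg b) (G : Polynomial R) (hG : G.Monic)
    (hGw : h13_wt deg G.natDegree G) (m : ℕ) :
    ∀ (n : ℕ) (p : Polynomial R), p.degree < n → h13_wt deg m p → h13_wt deg m (p %ₘ G) := by
  intro n
  induction n with
  | zero =>
    intro p hp hw
    have : p = 0 := by
      rw [← Polynomial.degree_eq_bot]
      simpa using hp
    subst this
    rw [Polynomial.zero_modByMonic]; exact hw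
  | succ n ih =>
    intro p hp hw
    by_cases hlt : p.degree < G.degree
    · rw [(Polynomial.modByMonic_eq_self_iff hG).2 hlt]; exact hw
    · have hp0 : p ≠ 0 := by
        rintro rfl
        apply hlt
        rw [Polynomial.degree_zero]
        exact bot_lt_iff_ne_bot.2 (by rw [Ne, Polynomial.degree_eq_bot]; exact hG.ne_zero)
      have hle := Polynomial.div_wf_lemma ⟨not_lt.1 hlt, hp0⟩ hG
      set p' := p - G * (Polynomial.C p.leadingCoeff * Polynomial.X ^ (p.natDegree - G.natDegree))
        with hp'
      have hmod : p %ₘ G = p' %ₘ G := by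
        rw [hp', Polynomial.sub_modByMonic]
        rw [(Polynomial.modByMonic_eq_zero_iff_dvd hG).2 (Dvd.intro _ rfl), sub_zero]
      rw [hmod]
      apply ih
      · refine lt_of_lt_of_le hle ?_
        have h1 : p.natDegree < n + 1 := (Polynomial.natDegree_lt_iff_degree_lt hp0).2 hp
        rw [Polynomial.degree_eq_natDegree hp0]
        exact_mod_cast Nat.lt_succ_iff.1 h1
      · have hnd : G.natDegree ≤ p.natDegree := Polynomial.natDegree_le_natDegree (not_lt.1 hlt)
        have h4 := hw p.natDegree (by
          rw [Polynomial.coeff_natDegree]; exact Polynomial.leadingCoeff_ne_zero.2 hp0)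
        rw [Polynomial.coeff_natDegree] at h4
        have : p' = p + Polynomial.C (-p.leadingCoeff) *
            Polynomial.X ^ (p.natDegree - G.natDegree) * G := by
          rw [hp', Polynomial.C_neg]; ring
        rw [this]
        apply h13_wt_add deg hadd _ _ _ hw
        apply h13_wt_CXG deg hmul G.natDegree _ _ _ _ hGw
        rw [hneg]; omega

theorem h13_det_deg {F : Type*} [Field F] (d e : ℕ) (M : Matrix (Fin d) (Fin d) (Polynomial F))
    (h : ∀ i j, M i j ≠ 0 → (M i j).natDegree + i ≤ e + j) : M.det.natDegree ≤ d * e := by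
  rw [Matrix.det_apply]
  apply Polynomial.natDegree_sum_le_of_forall_le
  intro σ _
  refine le_trans (Polynomial.natDegree_smul_le _ _) ?_
  by_cases h0 : ∃ i, M (σ i) i = 0
  · obtain ⟨i, hi⟩ := h0
    rw [Finset.prod_eq_zero (f := fun i => M (σ i) i) (Finset.mem_univ i) hi]; simp
  · push Not at h0
    refine le_trans (Polynomial.natDegree_prod_le _ _) ?_
    have h1 : ∑ i, ((M (σ i) i).natDegree + (σ i : ℕ)) ≤ ∑ i : Fin d, (e + (i : ℕ)) :=
      Finset.sum_le_sum fun i _ => h _ _ (h0 i)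
    rw [Finset.sum_add_distrib, Finset.sum_add_distrib] at h1
    have h2 : ∑ i, (σ i : ℕ) = ∑ i : Fin d, (i : ℕ) := Equiv.sum_comp σ (fun i : Fin d => (i : ℕ))
    simp at h1
    change ∑ i, (M (σ i) i).natDegree ≤ d * e
    omega

theorem h13_wt_modX {F : Type*} [Field F] (G H : Polynomial (Polynomial F)) (hG : G.Monic)
    (hGw : h13_wt Polynomial.natDegree G.natDegree G) (e : ℕ)
    (hH : h13_wt Polynomial.natDegree e H) (j : ℕ) :
    h13_wt Polynomial.natDegree (e + j) ((H * Polynomial.X ^ j) %ₘ G) := by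
  have hm : ∀ a b : Polynomial F, (a * b).natDegree ≤ a.natDegree + b.natDegree :=
    fun a b => Polynomial.natDegree_mul_le
  have ha : ∀ a b : Polynomial F, (a + b).natDegree ≤ max a.natDegree b.natDegree :=
    fun a b => Polynomial.natDegree_add_le a b
  have hn : ∀ a : Polynomial F, (-a).natDegree = a.natDegree :=
    fun a => Polynomial.natDegree_neg a
  have hw : h13_wt Polynomial.natDegree (e + j) (H * Polynomial.X ^ j) := by
    have := h13_wt_CXG Polynomial.natDegree hm e j (e + j)
      (1 : Polynomial F) H hH (by rw [Polynomial.natDegree_one]; omega)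
    rw [Polynomial.C_1, one_mul, mul_comm] at this
    exact this
  apply h13_wt_mod Polynomial.natDegree ha hn hm G hG hGw (e + j)
    ((H * Polynomial.X ^ j).natDegree + 1) _ _ hw
  refine lt_of_le_of_lt Polynomial.degree_le_natDegree ?_
  exact_mod_cast Nat.lt_succ_self _

/-- degree of the norm -/
theorem h13_norm_deg {F : Type*} [Field F] (G H : Polynomial (Polynomial F)) (hG : G.Monic)
    (hGw : h13_wt Polynomial.natDegree G.natDegree G) (e : ℕ)
    (hH : h13_wt Polynomial.natDegree e H) :
    (Algebra.norm (Polynomial F) (AdjoinRoot.mk G H)).natDegree ≤ G.natDegree * e := by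
  rw [Algebra.norm_eq_matrix_det (AdjoinRoot.powerBasisAux' hG)]
  apply h13_det_deg
  intro i j
  have hb : (AdjoinRoot.powerBasisAux' hG) j = AdjoinRoot.mk G (Polynomial.X ^ (j : ℕ)) := by
    rw [← Module.Basis.repr_symm_single_one, AdjoinRoot.powerBasisAux'_repr_symm_apply]
    congr 1
    rw [Finset.sum_eq_single j]
    · simp [Polynomial.X_pow_eq_monomial]
    · intro k _ hk
      rw [Finsupp.single_eq_of_ne hk]; simp
    · simp
  rw [Algebra.leftMulMatrix_eq_repr_mul, hb, ← map_mul]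
  have hb2 : ((AdjoinRoot.powerBasisAux' hG).repr
      (AdjoinRoot.mk G (H * Polynomial.X ^ (j : ℕ)))) i
      = ((H * Polynomial.X ^ (j : ℕ)) %ₘ G).coeff i := by
    rw [AdjoinRoot.powerBasisAux'_repr_apply_to_fun hG, AdjoinRoot.modByMonicHom_mk]
  rw [hb2]
  have := h13_wt_modX G H hG hGw e hH j i
  exact this


noncomputable def h13_Th {F : Type} [Field F] :
    MvPolynomial (Fin 2) F →ₐ[F] Polynomial (Polynomial F) :=
  MvPolynomial.aeval ![Polynomial.X, Polynomial.C Polynomial.X * Polynomial.X]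

theorem h13_Th_mon {F : Type} [Field F] (m : Fin 2 →₀ ℕ) (c : F) :
    h13_Th (MvPolynomial.monomial m c) =
      Polynomial.monomial (m 0 + m 1) (Polynomial.monomial (m 1) c) := by
  rw [h13_Th, MvPolynomial.aeval_monomial, Finsupp.prod_fintype _ _ (by simp), Fin.prod_univ_two]
  simp only [Matrix.cons_val_zero, Matrix.cons_val_one]
  rw [← Polynomial.C_mul_X_pow_eq_monomial, ← Polynomial.C_mul_X_pow_eq_monomial,
    mul_pow, ← Polynomial.C_pow, Polynomial.C_mul, pow_add]
  rw [show (algebraMap F (Polynomial (Polynomial F))) c = Polynomial.C (Polynomial.C c) from rfl]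
  ring

theorem h13_Th_ind {F : Type} [Field F] (P : MvPolynomial (Fin 2) F → Prop)
    (hm : ∀ m c, P (MvPolynomial.monomial m c)) (ha : ∀ p r, P p → P r → P (p + r)) :
    ∀ p, P p := by
  intro p
  exact MvPolynomial.induction_on' p hm ha

theorem h13_Th_y {F : Type} [Field F] (p : MvPolynomial (Fin 2) F) (n : ℕ) :
    (h13_Th (MvPolynomial.pderiv 1 p)).coeff n =
      Polynomial.derivative ((h13_Th p).coeff (n + 1)) := by
  revert p
  apply h13_Th_ind
  · intro m c
    rw [MvPolynomial.pderiv_monomial, h13_Th_mon, h13_Th_mon, Polynomial.coeff_monomial,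
      Polynomial.coeff_monomial]
    simp only [Finsupp.coe_tsub, Pi.sub_apply, Finsupp.single_eq_same,
      Finsupp.single_apply]
    norm_num
    by_cases h1 : m 1 = 0
    · simp only [h1]
      split_ifs <;> simp
    · have : (m 0 + (m 1 - 1) = n) ↔ (m 0 + m 1 = n + 1) := by omega
      simp only [this]
      split_ifs
      · rw [Polynomial.derivative_monomial]
      · simp
  · intro p r hp hr
    simp only [map_add, Polynomial.coeff_add, hp, hr]

theorem h13_Th_x {F : Type} [Field F] (p : MvPolynomial (Fin 2) F) (n : ℕ) :
    (h13_Th (MvPolynomial.pderiv 0 p)).coeff n +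
      Polynomial.X * (h13_Th (MvPolynomial.pderiv 1 p)).coeff n =
      ((n + 1 : ℕ) : Polynomial F) * (h13_Th p).coeff (n + 1) := by
  revert p
  apply h13_Th_ind
  · intro m c
    rw [h13_Th_y, MvPolynomial.pderiv_monomial, h13_Th_mon, h13_Th_mon, Polynomial.coeff_monomial,
      Polynomial.coeff_monomial]
    simp only [Finsupp.coe_tsub, Pi.sub_apply, Finsupp.single_eq_same,
      Finsupp.single_apply]
    norm_num
    have hX : Polynomial.X * Polynomial.derivative (Polynomial.monomial (m 1) c) =
        ((m 1 : ℕ) : Polynomial F) * Polynomial.monomial (m 1) c := by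
      rw [Polynomial.derivative_monomial]
      rcases Nat.eq_zero_or_pos (m 1) with h | h
      · simp [h]
      · rw [Polynomial.X_mul_monomial, Nat.sub_add_cancel h, ← Polynomial.C_eq_natCast,
          Polynomial.C_mul_monomial, mul_comm]
    by_cases h1 : m 0 = 0
    · simp [h1]
      split_ifs with h
      · rw [hX, h]; push_cast; ring
      · simp
    · have : (m 0 - 1 + m 1 = n) ↔ (m 0 + m 1 = n + 1) := by omega
      simp only [this]
      split_ifs with h
      · rw [hX, show (n : Polynomial F) + 1 = ((n + 1 : ℕ) : Polynomial F) by push_cast; rfl, ← h]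
        rw [mul_comm c, ← Polynomial.C_mul_monomial]
        rw [Polynomial.C_eq_natCast]; push_cast; ring
      · simp
  · intro p r hp hr
    simp only [map_add, Polynomial.coeff_add]
    linear_combination hp + hr

theorem h13_Th_natDegree {F : Type} [Field F] (p : MvPolynomial (Fin 2) F) :
    (h13_Th p).natDegree ≤ p.totalDegree := by
  rw [p.as_sum, map_sum]
  apply Polynomial.natDegree_sum_le_of_forall_le
  intro m hm
  rw [h13_Th_mon]
  refine le_trans (Polynomial.natDegree_monomial_le _) ?_
  rw [← p.as_sum]
  have := MvPolynomial.le_totalDegree hm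
  rw [Finsupp.sum_fintype _ _ (by simp), Fin.sum_univ_two] at this
  exact this

theorem h13_Th_coeff {F : Type} [Field F] (p : MvPolynomial (Fin 2) F) (d : ℕ) :
    ((h13_Th p).coeff d).coeff d = p.coeff (Finsupp.single 1 d) := by
  revert p
  apply h13_Th_ind
  · intro m c
    rw [h13_Th_mon, Polynomial.coeff_monomial, MvPolynomial.coeff_monomial]
    by_cases h : m = Finsupp.single 1 d
    · subst h; simp
    · rw [if_neg h]
      split_ifs with h1
      · rw [Polynomial.coeff_monomial, if_neg]
        intro h2
        apply h
        ext i
        fin_cases i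
        · simp; omega
        · simpa using h2
      · simp
  · intro p r hp hr
    simp only [map_add, Polynomial.coeff_add, MvPolynomial.coeff_add, hp, hr]

theorem h13_Th_lin {F : Type} [Field F] (p : MvPolynomial (Fin 2) F) (c : F) :
    Polynomial.map (Polynomial.evalRingHom c) (h13_Th p) = h13_lin p 0 ![1, c] := by
  revert p
  apply h13_Th_ind
  · intro m a
    rw [h13_Th_mon, h13_lin, MvPolynomial.aeval_monomial, Finsupp.prod_fintype _ _ (by simp),
      Fin.prod_univ_two, Polynomial.map_monomial]
    simp [← Polynomial.C_mul_X_pow_eq_monomial]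
    ring
  · intro p r hp hr
    simp only [map_add, h13_lin, Polynomial.map_add] at hp hr ⊢
    rw [hp, hr]

theorem h13_prod_X_sub {F : Type} [Field F] [Fintype F] :
    (Polynomial.X ^ Fintype.card F - Polynomial.X : Polynomial F) =
      ∏ c : F, (Polynomial.X - Polynomial.C c) := by
  have h1 : 1 < Fintype.card F := Fintype.one_lt_card
  have hr := FiniteField.roots_X_pow_card_sub_X F
  have hm : (Polynomial.X ^ Fintype.card F - Polynomial.X : Polynomial F).Monic := by
    apply Polynomial.monic_X_pow_sub
    rw [Polynomial.degree_X]; exact_mod_cast h1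
  rw [← Polynomial.prod_multiset_X_sub_C_of_monic_of_roots_card_eq hm, hr]
  · rfl
  · rw [hr, FiniteField.X_pow_card_sub_X_natDegree_eq F h1]; rfl

theorem h13_not_dvd {F : Type} [Field F] [Fintype F] (q : ℕ) (hq : 2 ≤ q) (hq0 : (q : F) = 0)
    (hcard : Fintype.card F = q ^ 2) (g : MvPolynomial (Fin 2) F) (hd : g.totalDegree ≤ q + 1)
    (hT : ∀ c : F, (h13_lin g 0 ![1, c]).coeff (q + 1) ≠ 0)
    (h1 : g.coeff (Finsupp.single 1 (q + 1)) ≠ 0) :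
    ¬ g ∣ (MvPolynomial.X 0 ^ q ^ 2 - MvPolynomial.X 0) * MvPolynomial.pderiv 0 g +
      (MvPolynomial.X 1 ^ q ^ 2 - MvPolynomial.X 1) * MvPolynomial.pderiv 1 g := by
  rintro ⟨k, hk⟩
  have hk' := congrArg h13_Th hk
  have hX0 : h13_Th (MvPolynomial.X 0 : MvPolynomial (Fin 2) F) = Polynomial.X := by
    simp [h13_Th]
  have hX1 : h13_Th (MvPolynomial.X 1 : MvPolynomial (Fin 2) F) =
    Polynomial.C Polynomial.X * Polynomial.X := by simp [h13_Th]
  simp only [map_add, map_mul, map_sub, map_pow, hX0, hX1] at hk'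
  set T := (h13_Th g).coeff (q + 1) with hTdef
  have hTne : T ≠ 0 := by
    intro h0
    apply h1
    rw [← h13_Th_coeff, ← hTdef, h0, Polynomial.coeff_zero]
  have hgd : (h13_Th g).natDegree = q + 1 :=
    le_antisymm (le_trans (h13_Th_natDegree g) hd) (Polynomial.le_natDegree_of_ne_zero hTne)
  have hg0 : h13_Th g ≠ 0 := by intro h; rw [h] at hgd; simp at hgd
  have hy : ∀ n, q < n → (h13_Th (MvPolynomial.pderiv 1 g)).coeff n = 0 := by
    intro n hn
    rw [h13_Th_y, Polynomial.coeff_eq_zero_of_natDegree_lt (by omega), map_zero]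
  have hx : ∀ n, q < n → (h13_Th (MvPolynomial.pderiv 0 g)).coeff n = 0 := by
    intro n hn
    have := h13_Th_x g n
    rw [hy n hn, Polynomial.coeff_eq_zero_of_natDegree_lt (p := h13_Th g) (n := n + 1) (by omega)]
      at this
    simpa using this
  set A := h13_Th (MvPolynomial.pderiv 0 g) with hA
  set B := h13_Th (MvPolynomial.pderiv 1 g) with hB
  have hAd : A.natDegree ≤ q := Polynomial.natDegree_le_iff_coeff_eq_zero.2 hx
  have hBd : B.natDegree ≤ q := Polynomial.natDegree_le_iff_coeff_eq_zero.2 hy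
  have hBq : B.coeff q = Polynomial.derivative T := h13_Th_y g q
  have hAq : A.coeff q + Polynomial.X * B.coeff q = T := by
    have := h13_Th_x g q
    rw [← hA, ← hB, ← hTdef] at this
    rw [this]; push_cast
    rw [show (q : Polynomial F) = Polynomial.C (q : F) by simp, hq0]; simp
  have hqq : 2 * q ≤ q ^ 2 := by nlinarith
  set L := (Polynomial.X ^ q ^ 2 - Polynomial.X) * A + ((Polynomial.C Polynomial.X * Polynomial.X) ^ q ^ 2 -
    Polynomial.C Polynomial.X * Polynomial.X) * B with hL
  have hLc : ∀ n, q ≤ n → L.coeff (q ^ 2 + n) = A.coeff n + Polynomial.X ^ q ^ 2 * B.coeff n := by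
    intro n hn
    obtain ⟨m, hm⟩ : ∃ m, q ^ 2 + n = m + 1 := ⟨q ^ 2 + n - 1, by omega⟩
    have e1 : (Polynomial.X * A).coeff (q ^ 2 + n) = 0 := by
      rw [hm, Polynomial.coeff_X_mul]; exact hx _ (by omega)
    have e2 : (Polynomial.X * B).coeff (q ^ 2 + n) = 0 := by
      rw [hm, Polynomial.coeff_X_mul]; exact hy _ (by omega)
    rw [hL, mul_pow, sub_mul, sub_mul, ← Polynomial.C_pow, mul_assoc, mul_assoc]
    simp only [Polynomial.coeff_add, Polynomial.coeff_sub, Polynomial.coeff_C_mul, e1, e2]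
    rw [add_comm (q ^ 2) n, Polynomial.coeff_X_pow_mul, Polynomial.coeff_X_pow_mul]
    ring
  have hLd : L.natDegree ≤ q ^ 2 + q := by
    rw [Polynomial.natDegree_le_iff_coeff_eq_zero]
    intro n hn
    obtain ⟨m, rfl⟩ : ∃ m, n = q ^ 2 + m := ⟨n - q ^ 2, by omega⟩
    rw [hLc m (by omega), hx m (by omega), hy m (by omega)]; simp
  have hkd : (h13_Th k).natDegree ≤ q ^ 2 - 1 := by
    by_cases h0 : h13_Th k = 0
    · rw [h0]; simp
    · have := Polynomial.natDegree_mul hg0 h0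
      rw [← hk', hgd] at this; omega
  have htop : T * (h13_Th k).coeff (q ^ 2 - 1) =
      T + (Polynomial.X ^ q ^ 2 - Polynomial.X) * Polynomial.derivative T := by
    rw [hTdef, ← Polynomial.coeff_mul_add_eq_of_natDegree_le hgd.le hkd, ← hk',
      show q + 1 + (q ^ 2 - 1) = q ^ 2 + q by omega, hLc q le_rfl, ← hTdef]
    rw [hBq] at hAq ⊢
    linear_combination hAq
  have hdv : T ∣ (Polynomial.X ^ q ^ 2 - Polynomial.X) * Polynomial.derivative T :=
    ⟨(h13_Th k).coeff (q ^ 2 - 1) - 1, by linear_combination -htop⟩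
  have hroot : ∀ c, T.eval c ≠ 0 := by
    intro c
    have := hT c
    rw [← h13_Th_lin, Polynomial.coeff_map] at this
    exact this
  have hcop : IsCoprime T (Polynomial.X ^ q ^ 2 - Polynomial.X) := by
    rw [← hcard, h13_prod_X_sub]
    apply IsCoprime.prod_right
    intro c _
    rw [isCoprime_comm]
    refine (Polynomial.irreducible_X_sub_C c).coprime_iff_not_dvd.2 ?_
    rw [Polynomial.dvd_iff_isRoot]
    exact hroot c
  have hdv2 := hcop.dvd_of_dvd_mul_left hdv
  have hdT : Polynomial.derivative T = 0 := by
    by_contra hne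
    have h5 := Polynomial.natDegree_le_of_dvd hdv2 hne
    have h6 : T.natDegree ≠ 0 := by
      intro h
      apply hne
      rw [Polynomial.eq_C_of_natDegree_eq_zero h, Polynomial.derivative_C]
    have := Polynomial.natDegree_derivative_lt h6
    omega
  have := congrArg (fun r => Polynomial.coeff r q) hdT
  simp only [Polynomial.coeff_derivative, Polynomial.coeff_zero] at this
  rw [hTdef, h13_Th_coeff, hq0, zero_add, mul_one] at this
  exact h1 this


noncomputable def h13_E (F : Type) [Field F] :
    MvPolynomial (Fin 2) F ≃ₐ[F] Polynomial (Polynomial F) :=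
  (MvPolynomial.finSuccEquiv F 1).trans
    (Polynomial.mapAlgEquiv (MvPolynomial.uniqueAlgEquiv F (Fin 1)))

theorem h13_E_coeff {F : Type} [Field F] (p : MvPolynomial (Fin 2) F) (i j : ℕ) :
    ((h13_E F p).coeff i).coeff j = p.coeff (Finsupp.cons i (Finsupp.single 0 j)) := by
  have : (h13_E F p).coeff i =
    MvPolynomial.uniqueAlgEquiv F (Fin 1) ((MvPolynomial.finSuccEquiv F 1 p).coeff i) := by
    simp [h13_E, Polynomial.mapAlgEquiv]
  rw [this, MvPolynomial.coeff_uniqueAlgEquiv, MvPolynomial.finSuccEquiv_coeff_coeff]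
  rfl

theorem h13_cons_apply (i j : ℕ) :
    (Finsupp.cons i (Finsupp.single (0 : Fin 1) j) : Fin 2 →₀ ℕ).sum (fun _ e => e) = i + j := by
  rw [Finsupp.sum_fintype _ _ (by simp), Fin.sum_univ_two, Finsupp.cons_zero]
  have := Finsupp.cons_succ (0 : Fin 1) i (Finsupp.single (0 : Fin 1) j)
  simp only [Finsupp.single_eq_same] at this
  rw [show (1 : Fin 2) = Fin.succ 0 from rfl, this]

theorem h13_E_wt {F : Type} [Field F] (p : MvPolynomial (Fin 2) F) (d : ℕ)
    (hd : p.totalDegree ≤ d) : h13_wt Polynomial.natDegree d (h13_E F p) := by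
  intro i hi
  have h1 : ((h13_E F p).coeff i).coeff ((h13_E F p).coeff i).natDegree ≠ 0 := by
    rw [Polynomial.coeff_natDegree]; exact Polynomial.leadingCoeff_ne_zero.2 hi
  rw [h13_E_coeff] at h1
  have := MvPolynomial.le_totalDegree (MvPolynomial.mem_support_iff.2 h1)
  rw [h13_cons_apply] at this
  omega

theorem h13_E_monic {F : Type} [Field F] (p : MvPolynomial (Fin 2) F) (d : ℕ)
    (hd : p.totalDegree ≤ d) (h : p.coeff (Finsupp.single 0 d) = 1) :
    (h13_E F p).Monic ∧ (h13_E F p).natDegree = d := by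
  have hw := h13_E_wt p d hd
  have hs : (Finsupp.cons d (Finsupp.single (0 : Fin 1) 0) : Fin 2 →₀ ℕ) = Finsupp.single 0 d := by
    ext i
    refine Fin.cases ?_ ?_ i
    · simp
    · intro j; rw [Finsupp.cons_succ]; simp
  have hc : (h13_E F p).coeff d = 1 := by
    have h0 : ((h13_E F p).coeff d).coeff 0 = 1 := by rw [h13_E_coeff, hs, h]
    have h1 : (h13_E F p).coeff d ≠ 0 := by intro h2; rw [h2] at h0; simp at h0
    have h2 := hw d h1
    rw [Polynomial.eq_C_of_natDegree_eq_zero (p := (h13_E F p).coeff d) (by omega), h0,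
      Polynomial.C_1]
  have hle : (h13_E F p).natDegree ≤ d := by
    rw [Polynomial.natDegree_le_iff_coeff_eq_zero]
    intro n hn
    by_contra h1
    have := hw n h1
    omega
  refine ⟨Polynomial.monic_of_natDegree_le_of_coeff_eq_one d hle hc, ?_⟩
  refine le_antisymm hle (Polynomial.le_natDegree_of_ne_zero ?_)
  rw [hc]; exact one_ne_zero

noncomputable def h13_rho {F : Type} [Field F] (a v : Fin 2 → F) :
    MvPolynomial (Fin 2) F →ₐ[F] DualNumber F :=
  MvPolynomial.aeval (fun i => (TrivSqZeroExt.inl (a i) + TrivSqZeroExt.inr (v i) : DualNumber F))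

theorem h13_rho_fst_snd {F : Type} [Field F] (a v : Fin 2 → F) (p : MvPolynomial (Fin 2) F) :
    (h13_rho a v p).fst = MvPolynomial.eval a p ∧
    (h13_rho a v p).snd = ∑ i, v i * MvPolynomial.eval a (MvPolynomial.pderiv i p) := by
  induction p using MvPolynomial.induction_on with
  | C c => simp [h13_rho, MvPolynomial.algebraMap_eq, TrivSqZeroExt.algebraMap_eq_inl]
  | add p r hp hr =>
    simp only [map_add, TrivSqZeroExt.fst_add, TrivSqZeroExt.snd_add, hp, hr]
    simp only [mul_add, Finset.sum_add_distrib, and_self]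
  | mul_X p n hp =>
    have hX : h13_rho a v (MvPolynomial.X n) =
      TrivSqZeroExt.inl (a n) + TrivSqZeroExt.inr (v n) := by simp [h13_rho]
    rw [map_mul, hX]
    constructor
    · simp [hp.1]
    · rw [DualNumber.snd_mul, hp.1, hp.2]
      simp only [TrivSqZeroExt.snd_add, TrivSqZeroExt.snd_inl, TrivSqZeroExt.snd_inr,
        TrivSqZeroExt.fst_add, TrivSqZeroExt.fst_inl, TrivSqZeroExt.fst_inr]
      simp only [Derivation.leibniz, smul_eq_mul, map_add, map_mul, MvPolynomial.eval_X,
        MvPolynomial.pderiv_X, Fin.sum_univ_two]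
      fin_cases n <;> simp [Pi.single_apply] <;> ring

theorem h13_rho_sep {F : Type} [Field F] [Fintype F] (hc : 3 ≤ Fintype.card F)
    {ι : Type} [Fintype ι] [DecidableEq ι] (a v : ι → Fin 2 → F) (ha : Function.Injective a)
    (hv : ∀ i, v i ≠ 0) (y : ι → DualNumber F) :
    ∃ p, ∀ i, h13_rho (a i) (v i) p = y i := by
  have hX : ∀ i n, h13_rho (a i) (v i) (MvPolynomial.X n) =
      TrivSqZeroExt.inl (a i n) + TrivSqZeroExt.inr (v i n) := by simp [h13_rho]
  have hC : ∀ i c, h13_rho (a i) (v i) (MvPolynomial.C c) = TrivSqZeroExt.inl c := by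
    intro i c
    simp [h13_rho, MvPolynomial.algebraMap_eq, TrivSqZeroExt.algebraMap_eq_inl]
  have hsq : ∀ x : DualNumber F, x.fst = 0 → ∀ n, 2 ≤ n → x ^ n = 0 := by
    intro x hx n hn
    obtain ⟨k, rfl⟩ := Nat.exists_eq_add_of_le hn
    have : x ^ 2 = 0 := by
      rw [pow_two]
      ext
      · simp [hx]
      · rw [DualNumber.snd_mul, hx]; simp
    rw [pow_add, this, zero_mul]
  set Q := Fintype.card F with hQ
  let del : ι → MvPolynomial (Fin 2) F := fun j =>
    ∏ n, (1 - (MvPolynomial.X n - MvPolynomial.C (a j n)) ^ (Q - 1)) ^ 2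
  have hdel : ∀ i j, h13_rho (a i) (v i) (del j) = if i = j then 1 else 0 := by
    intro i j
    have hfac : ∀ n, h13_rho (a i) (v i) (MvPolynomial.X n - MvPolynomial.C (a j n)) =
        TrivSqZeroExt.inl (a i n - a j n) + TrivSqZeroExt.inr (v i n) := by
      intro n
      rw [map_sub, hX, hC, TrivSqZeroExt.inl_sub]
      ring
    simp only [del, map_prod, map_pow, map_sub, map_one]
    simp only [← map_sub]
    split_ifs with h
    · subst h
      apply Finset.prod_eq_one
      intro n _
      rw [hsq _ _ (Q - 1) (by omega)]
      · simp
      · rw [hfac]; simp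
    · obtain ⟨n, hn⟩ : ∃ n, a i n ≠ a j n := by
        by_contra hcon; push Not at hcon
        exact h (ha (funext hcon))
      apply Finset.prod_eq_zero (Finset.mem_univ n)
      apply hsq _ _ 2 le_rfl
      rw [TrivSqZeroExt.fst_sub, TrivSqZeroExt.fst_pow, hfac]
      simp only [TrivSqZeroExt.fst_add, TrivSqZeroExt.fst_inl, TrivSqZeroExt.fst_inr, add_zero,
        TrivSqZeroExt.fst_one]
      rw [FiniteField.pow_card_sub_one_eq_one _ (sub_ne_zero.2 hn), sub_self]
  have hk : ∀ j, ∃ k, v j k ≠ 0 := by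
    intro j
    by_contra hcon; push Not at hcon
    exact hv j (funext hcon)
  choose k hk using hk
  refine ⟨∑ j, del j * (MvPolynomial.C (y j).fst + MvPolynomial.C ((y j).snd * (v j (k j))⁻¹) *
    (MvPolynomial.X (k j) - MvPolynomial.C (a j (k j)))), fun i => ?_⟩
  rw [map_sum, Finset.sum_eq_single i]
  · rw [map_mul, hdel, if_pos rfl, one_mul]
    simp only [map_add, map_mul, map_sub, hC, hX]
    ext
    · simp
    · have := hk i
      simp
      field_simp
  · intro j _ hj
    rw [map_mul, hdel, if_neg (Ne.symm hj), zero_mul]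
  · simp


theorem h13_finrank_le {K M A B : Type*} [Field K] [AddCommGroup M] [Module K M]
    [AddCommGroup A] [Module K A] [AddCommGroup B] [Module K B] [Module.Finite K A]
    (κ : M →ₗ[K] A) (Ψ : M →ₗ[K] B) (hκ : Function.Surjective κ) (hΨ : Function.Surjective Ψ)
    (hle : ∀ x, κ x = 0 → Ψ x = 0) : Module.finrank K B ≤ Module.finrank K A := by
  have hle' : LinearMap.ker κ ≤ LinearMap.ker Ψ := fun x hx => hle x hx
  let f : A →ₗ[K] B := ((LinearMap.ker κ).liftQ Ψ hle').comp
    (κ.quotKerEquivOfSurjective hκ).symm.toLinearMap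
  have hf : Function.Surjective f := by
    intro b
    obtain ⟨m, rfl⟩ := hΨ b
    refine ⟨κ m, ?_⟩
    have : (κ.quotKerEquivOfSurjective hκ).symm (κ m) = Submodule.Quotient.mk m := by
      rw [LinearEquiv.symm_apply_eq]; rfl
    simp [f, this]
  exact LinearMap.finrank_le_finrank_of_surjective hf

theorem h13_quot_finite {F : Type} [Field F] (G : Polynomial (Polynomial F)) (hG : G.Monic)
    (hGp : Prime G) (h : AdjoinRoot G) (hh : h ≠ 0) :
    Module.Finite F (AdjoinRoot G ⧸ Ideal.span ({h} : Set (AdjoinRoot G))) := by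
  have := AdjoinRoot.isDomain_of_prime hGp
  have hI : Ideal.span ({h} : Set (AdjoinRoot G)) ≠ ⊥ := by
    rw [Ne, Ideal.span_singleton_eq_bot]; exact hh
  let b := AdjoinRoot.powerBasisAux' hG
  have : ∀ i, Module.Finite F (Polynomial F ⧸ Ideal.span
      ({(Ideal.span ({h} : Set (AdjoinRoot G))).smithCoeffs b hI i} : Set (Polynomial F))) := by
    intro i
    exact (AdjoinRoot.powerBasis (Ideal.smithCoeffs_ne_zero b _ hI i)).finite
  exact Module.Finite.equiv (Ideal.quotientEquivDirectSum F b hI).symm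

theorem h13_bezout {F : Type} [Field F] (G H : Polynomial (Polynomial F)) (hG : G.Monic)
    (hGp : Prime G) (hGw : h13_wt Polynomial.natDegree G.natDegree G) (e : ℕ)
    (hH : h13_wt Polynomial.natDegree e H) (hGH : ¬ G ∣ H) {B : Type} [CommRing B] [Algebra F B]
    (Ψ : Polynomial (Polynomial F) →ₐ[F] B) (hΨ : Function.Surjective Ψ) (h1 : Ψ G = 0)
    (h2 : Ψ H = 0) : Module.finrank F B ≤ G.natDegree * e := by
  have := AdjoinRoot.isDomain_of_prime hGp
  have hne : AdjoinRoot.mk G H ≠ 0 := by rw [Ne, AdjoinRoot.mk_eq_zero]; exact hGH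
  have := h13_quot_finite G hG hGp _ hne
  refine le_trans ?_ (h13_norm_deg G H hG hGw e hH)
  rw [← finrank_quotient_span_eq_natDegree_norm (F := F) (AdjoinRoot.powerBasisAux' hG) hne]
  let κ : Polynomial (Polynomial F) →ₗ[F]
      (AdjoinRoot G ⧸ Ideal.span ({AdjoinRoot.mk G H} : Set (AdjoinRoot G))) :=
    (Ideal.Quotient.mkₐ F (Ideal.span ({AdjoinRoot.mk G H} : Set (AdjoinRoot G)))).toLinearMap.comp
      ((AdjoinRoot.mkₐ G).restrictScalars F).toLinearMap
  refine h13_finrank_le κ Ψ.toLinearMap ?_ hΨ ?_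
  · intro x
    obtain ⟨y, rfl⟩ := Ideal.Quotient.mk_surjective x
    obtain ⟨z, rfl⟩ := AdjoinRoot.mk_surjective y
    exact ⟨z, rfl⟩
  · intro x hx
    have hx' : Ideal.Quotient.mk (Ideal.span ({AdjoinRoot.mk G H} : Set (AdjoinRoot G)))
      (AdjoinRoot.mk G x) = 0 := hx
    rw [Ideal.Quotient.eq_zero_iff_mem, Ideal.mem_span_singleton] at hx'
    obtain ⟨r, hr⟩ := hx'
    obtain ⟨r, rfl⟩ := AdjoinRoot.mk_surjective r
    rw [← map_mul, AdjoinRoot.mk_eq_mk] at hr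
    obtain ⟨s, hs⟩ := hr
    have : x = H * r + G * s := by rw [← hs]; ring
    change Ψ x = 0
    rw [this, map_add, map_mul, map_mul, h1, h2]; ring

theorem h13_lemB_irr {F : Type} [Field F] [Fintype F] (q : ℕ) (hq : 2 ≤ q) (hq0 : (q : F) = 0)
    (hcard : Fintype.card F = q ^ 2) (g : MvPolynomial (Fin 2) F) (hd : g.totalDegree ≤ q + 1)
    (hT : ∀ c : F, (h13_lin g 0 ![1, c]).coeff (q + 1) ≠ 0)
    (h0 : g.coeff (Finsupp.single 0 (q + 1)) ≠ 0)
    (h1 : g.coeff (Finsupp.single 1 (q + 1)) ≠ 0) (hirr : Irreducible g) :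
    2 * Nat.card {v : Fin 2 → F // MvPolynomial.eval v g = 0} ≤ (q + 1) * (q ^ 2 + q) := by
  classical
  set H := (MvPolynomial.X 0 ^ q ^ 2 - MvPolynomial.X 0) * MvPolynomial.pderiv 0 g +
      (MvPolynomial.X 1 ^ q ^ 2 - MvPolynomial.X 1) * MvPolynomial.pderiv 1 g with hH
  have hnd : ¬ g ∣ H := h13_not_dvd q hq hq0 hcard g hd hT h1
  set c := g.coeff (Finsupp.single 0 (q + 1)) with hc
  have hu : IsUnit (MvPolynomial.C c⁻¹ : MvPolynomial (Fin 2) F) :=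
    (IsUnit.mk0 _ (inv_ne_zero h0)).map MvPolynomial.C
  set g' := MvPolynomial.C c⁻¹ * g with hg'
  have hd' : g'.totalDegree ≤ q + 1 := by
    rw [hg', ← MvPolynomial.smul_eq_C_mul]
    exact le_trans (MvPolynomial.totalDegree_smul_le _ _) hd
  have hc' : g'.coeff (Finsupp.single 0 (q + 1)) = 1 := by
    rw [hg', MvPolynomial.coeff_C_mul, ← hc, inv_mul_cancel₀ h0]
  have hnd' : ¬ g' ∣ H := fun h => hnd (dvd_trans (Dvd.intro_left _ rfl) h)
  have hirr' : Irreducible g' := (irreducible_isUnit_mul hu).2 hirr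
  obtain ⟨hm, hdeg⟩ := h13_E_monic g' (q + 1) hd' hc'
  have hprime : Prime (h13_E F g') :=
    (MulEquiv.prime_iff (h13_E F).toMulEquiv).2 hirr'.prime
  have hpd : ∀ i, (MvPolynomial.pderiv i g).totalDegree ≤ q := by
    intro i
    rw [g.as_sum, map_sum]
    apply MvPolynomial.totalDegree_finsetSum_le
    intro m hm
    rw [MvPolynomial.pderiv_monomial]
    have h3 := le_trans (MvPolynomial.le_totalDegree hm) hd
    by_cases hmi : m i = 0
    · simp [hmi]
    · refine le_trans (MvPolynomial.totalDegree_monomial_le _ _) ?_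
      rw [Finsupp.sum_fintype _ _ (by simp), Fin.sum_univ_two] at h3 ⊢
      simp only [Finsupp.coe_tsub, Pi.sub_apply, Finsupp.single_apply]
      fin_cases i
      · simp at hmi ⊢; omega
      · simp at hmi ⊢; omega
  have hXd : ∀ i : Fin 2, (MvPolynomial.X i ^ q ^ 2 - MvPolynomial.X i :
      MvPolynomial (Fin 2) F).totalDegree ≤ q ^ 2 := by
    intro i
    refine le_trans (MvPolynomial.totalDegree_sub _ _) (max_le ?_ ?_)
    · rw [MvPolynomial.totalDegree_X_pow]
    · rw [MvPolynomial.totalDegree_X]; nlinarith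
  have hHd : H.totalDegree ≤ q ^ 2 + q := by
    refine le_trans (MvPolynomial.totalDegree_add _ _) (max_le ?_ ?_)
    · exact le_trans (MvPolynomial.totalDegree_mul _ _) (add_le_add (hXd 0) (hpd 0))
    · exact le_trans (MvPolynomial.totalDegree_mul _ _) (add_le_add (hXd 1) (hpd 1))
  let ι := {v : Fin 2 → F // MvPolynomial.eval v g = 0}
  have hv : ∀ P : ι, ∃ v : Fin 2 → F, v ≠ 0 ∧
      ∑ i, v i * MvPolynomial.eval P.1 (MvPolynomial.pderiv i g) = 0 := by
    intro P
    by_cases h : ∀ i, MvPolynomial.eval P.1 (MvPolynomial.pderiv i g) = 0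
    · refine ⟨1, one_ne_zero, ?_⟩
      simp [h]
    · refine ⟨![MvPolynomial.eval P.1 (MvPolynomial.pderiv 1 g),
        -MvPolynomial.eval P.1 (MvPolynomial.pderiv 0 g)], ?_, ?_⟩
      · intro h2
        apply h
        have e0 := congrFun h2 0
        have e1 := congrFun h2 1
        simp at e0 e1
        intro i
        fin_cases i
        · exact e1
        · exact e0
      · simp [Fin.sum_univ_two]; ring
  choose v hv0 hv1 using hv
  let R : MvPolynomial (Fin 2) F →ₐ[F] (ι → DualNumber F) :=
    AlgHom.pi (fun P => h13_rho P.1 (v P))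
  have hR : Function.Surjective R := by
    intro y
    obtain ⟨p, hp⟩ := h13_rho_sep (by rw [hcard]; nlinarith) (fun P : ι => P.1) v
      Subtype.val_injective hv0 y
    exact ⟨p, funext hp⟩
  have hRg : R g = 0 := by
    funext P
    change h13_rho P.1 (v P) g = 0
    obtain ⟨e1, e2⟩ := h13_rho_fst_snd P.1 (v P) g
    ext
    · rw [e1, P.2]; rfl
    · rw [e2, hv1]; rfl
  have hRH : R H = 0 := by
    funext P
    change h13_rho P.1 (v P) H = 0
    have hdX : ∀ i : Fin 2, MvPolynomial.pderiv i (MvPolynomial.X i ^ q ^ 2 - MvPolynomial.X i :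
      MvPolynomial (Fin 2) F) = -1 := by
      intro i
      have : ((q : MvPolynomial (Fin 2) F)) = 0 := by
        rw [← map_natCast (MvPolynomial.C), hq0, map_zero]
      simp [Derivation.leibniz_pow, this]
    have hev : ∀ i : Fin 2, MvPolynomial.eval P.1 (MvPolynomial.X i ^ q ^ 2 - MvPolynomial.X i) = 0 := by
      intro i
      simp only [map_sub, map_pow, MvPolynomial.eval_X]
      rw [← hcard, FiniteField.pow_card, sub_self]
    have hd01 : ∀ i j : Fin 2, i ≠ j → MvPolynomial.pderiv i (MvPolynomial.X j ^ q ^ 2 - MvPolynomial.X j :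
      MvPolynomial (Fin 2) F) = 0 := by
      intro i j hij
      simp [Derivation.leibniz_pow, MvPolynomial.pderiv_X_of_ne hij.symm]
    obtain ⟨e1, e2⟩ := h13_rho_fst_snd P.1 (v P) H
    ext
    · rw [e1, hH]
      simp only [map_add, map_mul, hev]; simp
    · rw [e2, hH]
      have := hv1 P
      simp only [Fin.sum_univ_two] at this ⊢
      simp only [map_add, Derivation.leibniz, smul_eq_mul, map_mul, hev, hdX,
        hd01 0 1 (by decide), hd01 1 0 (by decide), map_neg, map_one, map_zero]
      simp only [TrivSqZeroExt.snd_zero]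
      linear_combination -this
  let Ψ := R.comp (h13_E F).symm.toAlgHom
  have hΨ : ∀ p, Ψ (h13_E F p) = R p := by intro p; simp [Ψ]
  have key := h13_bezout (h13_E F g') (h13_E F H) hm hprime
    (by rw [hdeg]; exact h13_E_wt g' _ hd') (q ^ 2 + q) (h13_E_wt H _ hHd)
    (by rw [map_dvd_iff]; exact hnd') Ψ
    (hR.comp (h13_E F).symm.surjective) (by rw [hΨ, hg', map_mul, hRg, mul_zero])
    (by rw [hΨ, hRH])
  rw [hdeg] at key
  refine le_trans (le_of_eq ?_) key
  have : Module.Finite F (DualNumber F) := inferInstanceAs (Module.Finite F (F × F))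
  have : Module.Free F (DualNumber F) := inferInstanceAs (Module.Free F (F × F))
  rw [Module.finrank_pi_fintype]
  have h2 : Module.finrank F (DualNumber F) = 2 := by
    change Module.finrank F (F × F) = 2
    simp
  simp [h2, mul_comm, ι]


theorem h13_dc {F V : Type} [Field F] [Fintype F] [AddCommGroup V] [Module F V] [Fintype V]
    [DecidableEq F] [DecidableEq V] (Z : V → Prop) [DecidablePred Z] (R : V) :
    (Fintype.card F - 1) * (Finset.univ.filter fun P => P ≠ R ∧ Z P).card ≤
    ∑ v ∈ Finset.univ.filter (fun v : V => v ≠ 0),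
      (Finset.univ.filter fun s : F => s ≠ 0 ∧ Z (R + s • v)).card := by
  have h1 : (Finset.univ.filter fun s : F => s ≠ 0).card = Fintype.card F - 1 := by
    rw [Finset.filter_ne' Finset.univ (0 : F), Finset.card_erase_of_mem (Finset.mem_univ _),
      Finset.card_univ]
  rw [← h1, ← Finset.card_product, ← Finset.card_sigma]
  apply Finset.card_le_card_of_injOn (fun x => ⟨x.1⁻¹ • (x.2 - R), x.1⟩)
  · rintro ⟨s, P⟩ h
    simp at h
    obtain ⟨hs, hP, hZ⟩ := h
    simp [hs, sub_ne_zero.2 hP, smul_smul, hZ]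
  · rintro ⟨s, P⟩ h ⟨s', P'⟩ h' he
    simp at h h' he
    obtain ⟨h2, rfl⟩ := he
    have := smul_right_injective V (inv_ne_zero h.1) h2
    simp at this
    rw [this]

theorem h13_nz_roots {F : Type} [Field F] [Fintype F] [DecidableEq F] (p : Polynomial F) (hp : p ≠ 0)
    (h0 : p.eval 0 = 0) (d : ℕ) (hd : p.natDegree ≤ d) :
    (Finset.univ.filter fun s : F => s ≠ 0 ∧ p.eval s = 0).card + 1 ≤ d := by
  have h1 : insert 0 (Finset.univ.filter fun s : F => s ≠ 0 ∧ p.eval s = 0) ⊆ p.roots.toFinset := by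
    intro s hs
    simp at hs
    rcases hs with rfl | hs
    · simp [hp, h0]
    · simp [hp, hs.2]
  have h2 := Finset.card_le_card h1
  rw [Finset.card_insert_of_notMem (by simp)] at h2
  have h3 := Multiset.toFinset_card_le p.roots
  have h4 := Polynomial.card_roots' p
  omega

theorem h13_cheap {F : Type} [Field F] [Fintype F] (g : MvPolynomial (Fin 2) F) (d : ℕ)
    (hd : g.totalDegree ≤ d) (hd1 : 1 ≤ d) (hl : ∀ R v, v ≠ 0 → h13_lin g R v ≠ 0) :
    Nat.card {v : Fin 2 → F // MvPolynomial.eval v g = 0} ≤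
      1 + (Fintype.card F + 1) * (d - 1) := by
  classical
  rw [Nat.card_eq_fintype_card, Fintype.card_subtype]
  rcases Finset.eq_empty_or_nonempty
    (Finset.univ.filter fun v : Fin 2 → F => MvPolynomial.eval v g = 0) with h | ⟨R, hR⟩
  · rw [h]; simp
  · simp at hR
    have h1 := h13_dc (F := F) (fun P : Fin 2 → F => MvPolynomial.eval P g = 0) R
    have h2 : ∀ v ∈ Finset.univ.filter (fun v : Fin 2 → F => v ≠ 0),
      (Finset.univ.filter fun s : F => s ≠ 0 ∧ MvPolynomial.eval (R + s • v) g = 0).card ≤ d - 1 := by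
      intro v hv
      simp at hv
      have := h13_nz_roots (h13_lin g R v) (hl R v hv) (by rw [h13_lin_eval]; simpa using hR) d
        (h13_lin_natDegree g R v d hd)
      simp only [h13_lin_eval] at this
      omega
    have h3 := le_trans h1 (Finset.sum_le_card_nsmul _ _ (d - 1) (fun v hv => by
      have := h2 v (by simpa using hv)
      convert this))
    rw [Finset.filter_ne' Finset.univ (0 : Fin 2 → F), Finset.card_erase_of_mem (Finset.mem_univ _),
      Finset.card_univ, Fintype.card_fun, Fintype.card_fin] at h3
    have h4 : (Finset.univ.filter fun v : Fin 2 → F => MvPolynomial.eval v g = 0) =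
      insert R (Finset.univ.filter fun P => P ≠ R ∧ MvPolynomial.eval P g = 0) := by
      ext P
      simp
      by_cases hP : P = R
      · simp [hP, hR]
      · simp [hP]
    rw [h4, Finset.card_insert_of_notMem (by simp), add_comm]
    apply Nat.add_le_add_left
    have hQ : 1 < Fintype.card F := Fintype.one_lt_card
    obtain ⟨m, hm⟩ : ∃ m, Fintype.card F = m + 2 := ⟨Fintype.card F - 2, by omega⟩
    rw [hm] at h3 ⊢
    have h5 : (m + 2) ^ 2 - 1 = (m + 1) * (m + 2 + 1) := by
      have : (m + 2) ^ 2 = (m + 1) * (m + 2 + 1) + 1 := by ring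
      omega
    rw [h5, smul_eq_mul, mul_assoc] at h3
    exact Nat.le_of_mul_le_mul_left h3 (Nat.succ_pos m)

theorem h13_lin_single {F : Type} [Field F] (g : MvPolynomial (Fin 2) F) (k : Fin 2) (d : ℕ) :
    (h13_lin g 0 (Pi.single k 1)).coeff d = g.coeff (Finsupp.single k d) := by
  revert g
  apply h13_Th_ind
  · intro m a
    rw [h13_lin, MvPolynomial.aeval_monomial, Finsupp.prod_fintype _ _ (by simp),
      Fin.prod_univ_two, MvPolynomial.coeff_monomial]
    have hk : ∀ j k : Fin 2, j ≠ k → (m = Finsupp.single k d ↔ m k = d ∧ m j = 0) := by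
      intro j k hjk
      constructor
      · rintro rfl; simp [hjk]
      · rintro ⟨h1, h2⟩
        ext i
        by_cases hi : i = k
        · subst hi; simpa using h1
        · have : i = j := by omega
          subst this
          simp [Finsupp.single_apply, h2, hjk.symm]
    fin_cases k
    · simp only [Fin.zero_eta, Fin.isValue, hk 1 0 (by decide)]
      by_cases h : m 1 = 0
      · simp [h, Polynomial.algebraMap_eq, Polynomial.coeff_X_pow, eq_comm]
      · simp [h]
    · simp only [Fin.mk_one, Fin.isValue, hk 0 1 (by decide)]
      by_cases h : m 0 = 0
      · simp [h, Polynomial.algebraMap_eq, Polynomial.coeff_X_pow, eq_comm]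
      · simp [h]
  · intro p r hp hr
    simp only [h13_lin, map_add, Polynomial.coeff_add, MvPolynomial.coeff_add] at hp hr ⊢
    rw [hp, hr]

theorem h13_lemB {F : Type} [Field F] [Fintype F] (q : ℕ) (hq : 3 ≤ q) (hq0 : (q : F) = 0)
    (hcard : Fintype.card F = q ^ 2) (g : MvPolynomial (Fin 2) F) (hd : g.totalDegree ≤ q + 1)
    (hT : ∀ R v, v ≠ 0 → (h13_lin g R v).coeff (q + 1) ≠ 0) :
    Nat.card {v : Fin 2 → F // MvPolynomial.eval v g = 0} < q ^ 3 := by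
  classical
  by_cases hirr : Irreducible g
  · have := h13_lemB_irr q (by omega) hq0 hcard g hd
      (fun c => hT _ _ (fun h => by simpa using congrFun h 0))
      (by rw [← h13_lin_single]; exact hT _ _ (by simp))
      (by rw [← h13_lin_single]; exact hT _ _ (by simp)) hirr
    have h2 : (q + 1) * (q ^ 2 + q) < 2 * q ^ 3 := by
      obtain ⟨m, rfl⟩ := Nat.exists_eq_add_of_le hq
      ring_nf
      nlinarith [sq_nonneg m]
    omega
  · have hg0 : g ≠ 0 := by
      rintro rfl
      exact hT 0 1 one_ne_zero (by simp [h13_lin])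
    have hunit : ¬ IsUnit g := by
      intro h
      rw [MvPolynomial.isUnit_iff_eq_C_of_isReduced] at h
      obtain ⟨c, _, rfl⟩ := h
      refine hT 0 1 one_ne_zero ?_
      simp [h13_lin, Polynomial.algebraMap_eq, Polynomial.coeff_C]
    rw [irreducible_iff] at hirr
    push Not at hirr
    obtain ⟨a, b, hab, ha, hb⟩ := hirr hunit
    have ha0 : a ≠ 0 := by rintro rfl; simp at hab; exact hg0 hab
    have hb0 : b ≠ 0 := by rintro rfl; simp at hab; exact hg0 hab
    have hdeg : ∀ r : MvPolynomial (Fin 2) F, r ≠ 0 → ¬ IsUnit r → 1 ≤ r.totalDegree := by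
      intro r hr hu
      by_contra hlt
      have h0 : r.totalDegree = 0 := by omega
      rw [MvPolynomial.totalDegree_eq_zero_iff_eq_C] at h0
      apply hu
      rw [h0] at hr ⊢
      refine (IsUnit.mk0 _ ?_).map MvPolynomial.C
      intro h; apply hr; rw [h, map_zero]
    have hda := hdeg a ha0 ha
    have hdb := hdeg b hb0 hb
    have hsum : a.totalDegree + b.totalDegree ≤ q + 1 := by
      rw [← MvPolynomial.totalDegree_mul_of_isDomain ha0 hb0, ← hab]; exact hd
    have hlin : ∀ R v, h13_lin g R v = h13_lin a R v * h13_lin b R v := by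
      intro R v; rw [hab]; simp [h13_lin]
    have hA := h13_cheap a _ le_rfl hda (by
      intro R v hv h
      apply hT R v hv
      rw [hlin, h]; simp)
    have hB := h13_cheap b _ le_rfl hdb (by
      intro R v hv h
      apply hT R v hv
      rw [hlin, h]; simp)
    have hle : Nat.card {v : Fin 2 → F // MvPolynomial.eval v g = 0} ≤
        Nat.card {v : Fin 2 → F // MvPolynomial.eval v a = 0} +
        Nat.card {v : Fin 2 → F // MvPolynomial.eval v b = 0} := by
      simp only [Nat.card_eq_fintype_card, Fintype.card_subtype]
      refine le_trans (Finset.card_le_card ?_) (Finset.card_union_le _ _)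
      intro v
      simp [hab]
    rw [hcard] at hA hB
    obtain ⟨x, hx⟩ := Nat.exists_eq_add_of_le hda
    obtain ⟨y, hy⟩ := Nat.exists_eq_add_of_le hdb
    rw [hx] at hA
    rw [hy] at hB
    simp only [Nat.add_sub_cancel_left] at hA hB
    have hxy : x + y ≤ q - 1 := by omega
    have h5 : (q ^ 2 + 1) * x + (q ^ 2 + 1) * y ≤ (q ^ 2 + 1) * (q - 1) := by
      rw [← mul_add]; exact Nat.mul_le_mul_left _ hxy
    have h6 : (q ^ 2 + 1) * (q - 1) + 2 < q ^ 3 := by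
      obtain ⟨m, rfl⟩ := Nat.exists_eq_add_of_le hq
      rw [show 3 + m - 1 = m + 2 by omega]
      ring_nf
      nlinarith [sq_nonneg m]
    omega


noncomputable def h13_sub {F : Type} [Field F] {n m : ℕ} (f : MvPolynomial (Fin n) F)
    (u : Fin n → F) (b : Fin m → Fin n → F) : MvPolynomial (Fin m) F :=
  MvPolynomial.aeval (fun i => MvPolynomial.C (u i) +
    ∑ j, MvPolynomial.C (b j i) * MvPolynomial.X j) f

theorem h13_sub_eval {F : Type} [Field F] {n m : ℕ} (f : MvPolynomial (Fin n) F)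
    (u : Fin n → F) (b : Fin m → Fin n → F) (R : Fin m → F) :
    MvPolynomial.eval R (h13_sub f u b) = MvPolynomial.eval (u + ∑ j, R j • b j) f := by
  rw [h13_sub, MvPolynomial.aeval_def, MvPolynomial.eval₂_eq_eval_map]
  induction f using MvPolynomial.induction_on with
  | C c => simp
  | add p r hp hr => simp only [map_add, hp, hr]
  | mul_X p k hp =>
    simp only [map_mul, hp]
    congr 1
    simp [mul_comm]

theorem h13_sub_totalDegree {F : Type} [Field F] {n m : ℕ} (f : MvPolynomial (Fin n) F)
    (u : Fin n → F) (b : Fin m → Fin n → F) (d : ℕ) (hd : f.totalDegree ≤ d) :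
    (h13_sub f u b).totalDegree ≤ d := by
  rw [h13_sub, f.as_sum, map_sum]
  apply MvPolynomial.totalDegree_finsetSum_le
  intro k hk
  have h3 := le_trans (MvPolynomial.le_totalDegree hk) hd
  rw [MvPolynomial.aeval_monomial]
  refine le_trans (MvPolynomial.totalDegree_mul _ _) ?_
  rw [MvPolynomial.algebraMap_eq, MvPolynomial.totalDegree_C, zero_add]
  rw [Finsupp.prod]
  refine le_trans (MvPolynomial.totalDegree_finsetProd _ _) (le_trans ?_ h3)
  apply Finset.sum_le_sum
  intro i _
  refine le_trans (MvPolynomial.totalDegree_pow _ _) ?_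
  refine le_trans (Nat.mul_le_mul_left _ ?_) (mul_one _).le
  refine le_trans (MvPolynomial.totalDegree_add _ _) (max_le ?_ ?_)
  · rw [MvPolynomial.totalDegree_C]; omega
  · apply MvPolynomial.totalDegree_finsetSum_le
    intro j _
    refine le_trans (MvPolynomial.totalDegree_mul _ _) ?_
    rw [MvPolynomial.totalDegree_C, MvPolynomial.totalDegree_X, zero_add]

theorem h13_sub_lin {F : Type} [Field F] {n m : ℕ} (f : MvPolynomial (Fin n) F)
    (u : Fin n → F) (b : Fin m → Fin n → F) (R v : Fin m → F) :
    h13_lin (h13_sub f u b) R v = h13_lin f (u + ∑ j, R j • b j) (∑ j, v j • b j) := by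
  rw [h13_lin, h13_lin, h13_sub]
  induction f using MvPolynomial.induction_on with
  | C c => simp [MvPolynomial.algebraMap_eq]
  | add p r hp hr => simp only [map_add, hp, hr]
  | mul_X p k hp =>
    simp only [map_mul, hp]
    congr 1
    simp only [MvPolynomial.aeval_X, map_add, map_sum, map_mul, MvPolynomial.aeval_C,
      Polynomial.algebraMap_eq, Pi.add_apply, Finset.sum_apply, Pi.smul_apply, smul_eq_mul,
      mul_add, Finset.sum_add_distrib, Finset.sum_mul, Polynomial.C_add, Polynomial.C_mul]
    rw [add_assoc]
    congr 2
    · exact Finset.sum_congr rfl fun j _ => by ring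
    · exact Finset.sum_congr rfl fun j _ => by ring

theorem h13_avg {F V ι : Type} [Field F] [AddCommGroup V] [Module F V] [Fintype V]
    [Fintype ι] (W : Submodule F V) (τ : ι → V) (hτ : ∀ i, τ i ∈ W) (Z : V → Prop)
    [DecidablePred Z] [DecidablePred (· ∈ W)] :
    ∑ u ∈ Finset.univ.filter (fun u => u ∉ W), (Finset.univ.filter fun i => Z (u + τ i)).card =
    Fintype.card ι * (Finset.univ.filter fun z => z ∉ W ∧ Z z).card := by
  simp only [Finset.card_filter]
  rw [Finset.sum_comm]
  have : ∀ i : ι, ∑ u ∈ Finset.univ.filter (fun u => u ∉ W), (if Z (u + τ i) then 1 else 0) =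
      ∑ z, if z ∉ W ∧ Z z then 1 else 0 := by
    intro i
    rw [Finset.sum_filter]
    rw [← Equiv.sum_comp (Equiv.addRight (τ i)) (fun z => if z ∉ W ∧ Z z then 1 else 0)]
    apply Finset.sum_congr rfl
    intro u _
    simp only [Equiv.coe_addRight, W.add_mem_iff_left (hτ i)]
    by_cases h1 : u ∈ W <;> simp [h1]
  rw [Finset.sum_congr rfl (fun i _ => this i), Finset.sum_const, Finset.card_univ, smul_eq_mul]

/-- Bose Burton: a point set of a solid with that many points which is not a plane has an
external line -/
theorem h13_ext_line {F V : Type} [Field F] [Fintype F] [AddCommGroup V] [Module F V]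
    [Fintype V] (W : Submodule F V) (hW : Module.finrank F W = 4) (Z : V → Prop)
    (hsm : ∀ (s : F) v, s ≠ 0 → Z (s • v) → Z v)
    (hneg : ∀ v, Z v → Z (-v)) (h0 : Z 0)
    (hcard : Nat.card {v : V // v ∈ W ∧ Z v} = Fintype.card F ^ 3)
    (a b : V) (ha : a ∈ W) (hb : b ∈ W) (hZa : Z a) (hZb : Z b) (hab : ¬ Z (a + b)) :
    ∃ c ∈ W, ∃ u ∈ W, ∀ s t : F, (s ≠ 0 ∨ t ≠ 0) → ¬ Z (s • c + t • u) := by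
  classical
  let c : W := ⟨a + b, W.add_mem ha hb⟩
  have hc : c ≠ 0 := by
    intro h
    have : a + b = 0 := congrArg Subtype.val h
    rw [this] at hab
    exact hab h0
  let L : Submodule F W := Submodule.span F {c}
  have hLc : Nat.card L = Fintype.card F := by
    rw [Nat.card_eq_fintype_card, Module.card_eq_pow_finrank (K := F) (V := L),
      finrank_span_singleton hc, pow_one]
  have hWc : Nat.card W = Fintype.card F ^ 4 := by
    rw [Nat.card_eq_fintype_card, Module.card_eq_pow_finrank (K := F) (V := W), hW]
  have hQ : 0 < Fintype.card F := Fintype.card_pos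
  have hquot : Nat.card (W ⧸ L) = Fintype.card F ^ 3 := by
    have := Submodule.card_eq_card_quotient_mul_card L
    rw [hLc, hWc] at this
    have h2 : Fintype.card F ^ 4 = Fintype.card F ^ 3 * Fintype.card F := by ring
    rw [h2] at this
    exact (Nat.eq_of_mul_eq_mul_right hQ (by rw [this]; ring)).symm
  let m : {v : V // v ∈ W ∧ Z v} → W ⧸ L := fun v => Submodule.Quotient.mk ⟨v.1, v.2.1⟩
  have hninj : ¬ Function.Injective m := by
    intro hinj
    have h1 : m ⟨a, ha, hZa⟩ = m ⟨-b, W.neg_mem hb, hneg b hZb⟩ := by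
      rw [Submodule.Quotient.eq]
      apply Submodule.mem_span_singleton.2
      refine ⟨1, ?_⟩
      apply Subtype.ext
      simp [c]
    have h2 := congrArg Subtype.val (hinj h1)
    simp only at h2
    apply hab
    rw [h2]; simpa using h0
  have hnsurj : ¬ Function.Surjective m := by
    intro hs
    exact hninj ((Nat.bijective_iff_surjective_and_card m).2 ⟨hs, by rw [hcard, hquot]⟩).1
  rw [Function.Surjective] at hnsurj
  push Not at hnsurj
  obtain ⟨y, hy⟩ := hnsurj
  obtain ⟨u, rfl⟩ := Submodule.Quotient.mk_surjective L y
  refine ⟨c.1, c.2, u.1, u.2, ?_⟩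
  intro s t hst hZ
  by_cases ht : t = 0
  · subst ht
    have hs : s ≠ 0 := by simpa using hst
    apply hab
    apply hsm s _ hs
    rw [zero_smul, add_zero] at hZ
    exact hZ
  · have hmem : t⁻¹ • (s • c.1 + t • u.1) ∈ W :=
      W.smul_mem _ (W.add_mem (W.smul_mem _ c.2) (W.smul_mem _ u.2))
    have hZ' : Z (t⁻¹ • (s • c.1 + t • u.1)) := by
      apply hsm t _ ht
      rw [smul_smul, mul_inv_cancel₀ ht, one_smul]; exact hZ
    apply hy ⟨_, hmem, hZ'⟩
    rw [Submodule.Quotient.eq]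
    apply Submodule.mem_span_singleton.2
    refine ⟨t⁻¹ * s, ?_⟩
    apply Subtype.ext
    simp [smul_smul, ht]


theorem h13_card_compl {F V : Type} [Field F] [Fintype F] [AddCommGroup V] [Module F V]
    [Fintype V] (W : Submodule F V) [DecidablePred (· ∈ W)] (m n : ℕ)
    (hW : Module.finrank F W = m) (hV : Module.finrank F V = n) :
    (Finset.univ.filter fun u => u ∉ W).card + Fintype.card F ^ m = Fintype.card F ^ n := by
  classical
  have h1 : (Finset.univ.filter fun u => u ∈ W).card = Fintype.card F ^ m := by
    rw [← Fintype.card_subtype, ← hW]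
    exact Module.card_eq_pow_finrank (K := F) (V := W)
  have h2 : Fintype.card V = Fintype.card F ^ n := by
    rw [← hV]; exact Module.card_eq_pow_finrank (K := F) (V := V)
  rw [← h1, ← h2, add_comm, ← Finset.card_univ]
  exact Finset.card_filter_add_card_filter_not _

theorem h13_add_closed {F : Type} [Field F] [Fintype F] (q : ℕ) (hq : 3 ≤ q) (hq0 : (q : F) = 0)
    (hcard : Fintype.card F = q ^ 2) (f : MvPolynomial (Fin 7) F) (hf : f.IsHomogeneous (q + 1))
    (W : Submodule F (Fin 7 → F)) (hW : Module.finrank F W = 4)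
    (hWc : Nat.card {v // v ∈ W ∧ MvPolynomial.eval v f = 0} = q ^ 6)
    (hZc : Nat.card {v // v ∉ W ∧ MvPolynomial.eval v f = 0} + q ^ 7 = q ^ 13)
    (a b : Fin 7 → F) (ha : a ∈ W) (hb : b ∈ W) (hZa : MvPolynomial.eval a f = 0)
    (hZb : MvPolynomial.eval b f = 0) : MvPolynomial.eval (a + b) f = 0 := by
  classical
  by_contra hab
  obtain ⟨c, hc, u, hu, hext⟩ := h13_ext_line W hW (fun v => MvPolynomial.eval v f = 0)
    (by
      intro s v hs h
      simp only [h13_eval_smul hf] at h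
      exact (mul_eq_zero.1 h).resolve_left (pow_ne_zero _ hs))
    (by
      intro v hv
      have := h13_eval_smul hf (-1) v
      rw [neg_one_smul] at this
      rw [this, hv, mul_zero])
    (by
      have := h13_eval_smul hf 0 0
      simpa using this)
    (by rw [hcard, hWc]; ring) a b ha hb hZa hZb hab
  have hlt : ∀ v ∈ Finset.univ.filter (fun v : Fin 7 → F => v ∉ W),
      (Finset.univ.filter fun R : Fin 2 → F =>
        MvPolynomial.eval (v + (R 0 • c + R 1 • u)) f = 0).card < q ^ 3 := by
    intro v _
    have h1 := h13_lemB q hq hq0 hcard (h13_sub f v ![c, u])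
      (h13_sub_totalDegree f v _ (q + 1) hf.totalDegree_le) (by
        intro R w hw
        rw [h13_sub_lin, h13_lin_symm hf (by rw [hcard]; nlinarith) _ _ _ le_rfl, Nat.sub_self,
          h13_lin_coeff_zero]
        simp only [Fin.sum_univ_two, Matrix.cons_val_zero, Matrix.cons_val_one]
        apply hext
        by_contra hcon
        push Not at hcon
        apply hw
        funext i
        fin_cases i
        · exact hcon.1
        · exact hcon.2)
    rw [Nat.card_eq_fintype_card, Fintype.card_subtype] at h1
    simp only [h13_sub_eval, Fin.sum_univ_two, Matrix.cons_val_zero, Matrix.cons_val_one] at h1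
    convert h1
  have hcompl := h13_card_compl W 4 7 hW (by simp)
  have havg := h13_avg W (fun R : Fin 2 → F => R 0 • c + R 1 • u)
    (fun R => W.add_mem (W.smul_mem _ hc) (W.smul_mem _ hu)) (fun v => MvPolynomial.eval v f = 0)
  rw [Nat.card_eq_fintype_card, Fintype.card_subtype] at hZc
  rw [hcard] at hcompl
  have hne : (Finset.univ.filter (fun v : Fin 7 → F => v ∉ W)).Nonempty := by
    rw [← Finset.card_pos]
    have : (q ^ 2) ^ 4 < (q ^ 2) ^ 7 := Nat.pow_lt_pow_right (by nlinarith) (by norm_num)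
    omega
  have hs := Finset.sum_lt_sum_of_nonempty hne hlt
  rw [havg, Finset.sum_const, smul_eq_mul, Fintype.card_fun, hcard, Fintype.card_fin] at hs
  set X := (Finset.univ.filter (fun v : Fin 7 → F => v ∉ W)).card
  set Y := (Finset.univ.filter (fun v : Fin 7 → F => v ∉ W ∧ MvPolynomial.eval v f = 0)).card
  have e1 : (q ^ 2) ^ 2 * Y + q ^ 11 = q ^ 17 := by
    calc (q ^ 2) ^ 2 * Y + q ^ 11 = q ^ 4 * (Y + q ^ 7) := by ring
      _ = q ^ 17 := by rw [hZc]; ring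
  have e2 : X * q ^ 3 + q ^ 11 = q ^ 17 := by
    calc X * q ^ 3 + q ^ 11 = q ^ 3 * (X + (q ^ 2) ^ 4) := by ring
      _ = q ^ 17 := by rw [hcompl]; ring
  omega

theorem h13_poly_eq_zero {F : Type} [Field F] [Fintype F] {n : ℕ} (p : MvPolynomial (Fin n) F)
    (hd : p.totalDegree < Fintype.card F) (h : ∀ v, MvPolynomial.eval v p = 0) : p = 0 := by
  refine MvPolynomial.eq_zero_of_eval_eq_zero _ _ p h ?_
  rw [MvPolynomial.mem_restrictDegree]
  intro s hs i
  have h1 := MvPolynomial.le_totalDegree hs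
  have h2 : s i ≤ s.sum fun _ e => e := by
    rw [Finsupp.sum_fintype _ _ (by simp)]
    exact Finset.single_le_sum (f := fun i => s i) (fun _ _ => Nat.zero_le _) (Finset.mem_univ i)
  omega

theorem h13_homComp {F : Type} [Field F] {n : ℕ} (p : MvPolynomial (Fin n) F) (d : ℕ)
    (v : Fin n → F) :
    (h13_lin p 0 v).coeff d = MvPolynomial.eval v (MvPolynomial.homogeneousComponent d p) := by
  induction p using MvPolynomial.induction_on' with
  | monomial m a =>
    rw [h13_lin, MvPolynomial.aeval_monomial, MvPolynomial.homogeneousComponent_of_mem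
      (MvPolynomial.isHomogeneous_monomial a (n := m.degree) rfl)]
    rw [Finsupp.prod_fintype _ _ (by simp)]
    simp only [Pi.zero_apply, Polynomial.C_0, zero_add, mul_pow, Finset.prod_mul_distrib]
    rw [Finset.prod_pow_eq_pow_sum, ← Finsupp.degree_eq_sum, Polynomial.algebraMap_eq,
      ← mul_assoc]
    simp only [← Polynomial.C_pow, ← map_prod, ← Polynomial.C_mul]
    rw [Polynomial.coeff_C_mul_X_pow]
    split_ifs
    · rw [MvPolynomial.eval_monomial, Finsupp.prod_fintype _ _ (by simp)]
    · simp
  | add p r hp hr =>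
    simp only [map_add, h13_lin, Polynomial.coeff_add] at hp hr ⊢
    rw [hp, hr]

theorem h13_drop {F : Type} [Field F] [Fintype F] {n : ℕ} (p : MvPolynomial (Fin n) F) (d : ℕ)
    (hd : p.totalDegree ≤ d + 1) (hc : d + 1 < Fintype.card F)
    (h : ∀ v, (h13_lin p 0 v).coeff (d + 1) = 0) : p.totalDegree ≤ d := by
  have h0 : MvPolynomial.homogeneousComponent (d + 1) p = 0 := by
    apply h13_poly_eq_zero
    · refine lt_of_le_of_lt ?_ hc
      exact (MvPolynomial.homogeneousComponent_isHomogeneous _ _).totalDegree_le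
    · intro v; rw [← h13_homComp, h]
  unfold MvPolynomial.totalDegree
  apply Finset.sup_le
  intro m hm
  have h1 := (MvPolynomial.le_totalDegree hm).trans hd
  by_contra hcon
  have h2 : m.degree = d + 1 := by
    have : m.degree = m.sum fun _ e => e := rfl
    omega
  have h3 := MvPolynomial.coeff_homogeneousComponent (d + 1) p m
  rw [h0, if_pos h2] at h3
  exact (MvPolynomial.mem_support_iff.1 hm) (by simpa using h3.symm)

theorem h13_sz {F : Type} [Field F] [Fintype F] [DecidableEq F] (p : MvPolynomial (Fin 3) F) (d : ℕ)
    (hd : p.totalDegree ≤ d) (hp : p ≠ 0) :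
    (Finset.univ.filter fun v => MvPolynomial.eval v p = 0).card ≤ d * Fintype.card F ^ 2 := by
  have h := MvPolynomial.schwartz_zippel_totalDegree hp (Finset.univ : Finset F)
  have hc : 0 < Fintype.card F := Fintype.card_pos
  rw [Fintype.piFinset_univ, Finset.card_univ, div_le_div_iff₀ (by positivity) (by positivity)] at h
  norm_cast at h
  have h2 : (Finset.univ.filter fun v => MvPolynomial.eval v p = 0).card * Fintype.card F
      ≤ (d * Fintype.card F ^ 2) * Fintype.card F := by
    refine h.trans ?_
    calc _ ≤ d * Fintype.card F ^ 3 := Nat.mul_le_mul_right _ hd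
      _ = _ := by ring
  exact Nat.le_of_mul_le_mul_right h2 hc


theorem h13_L4 {F : Type} [Field F] [Fintype F] (q : ℕ) (hq : 3 ≤ q) (hq0 : (q : F) = 0)
    (hcard : Fintype.card F = q ^ 2) (f : MvPolynomial (Fin 7) F) (hf : f.IsHomogeneous (q + 1))
    (W : Submodule F (Fin 7 → F)) (hW : Module.finrank F W = 4)
    (hWc : Nat.card {v // v ∈ W ∧ MvPolynomial.eval v f = 0} = q ^ 6)
    (hZc : Nat.card {v // v ∉ W ∧ MvPolynomial.eval v f = 0} + q ^ 7 = q ^ 13) :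
    ∃ b : Fin 3 → Fin 7 → F, LinearIndependent F b ∧ (∀ x : Fin 3 → F, ∑ j, x j • b j ∈ W) ∧
      (∀ x : Fin 3 → F, MvPolynomial.eval (∑ j, x j • b j) f = 0) ∧
      ∀ v ∈ W, MvPolynomial.eval v f = 0 → ∃ x : Fin 3 → F, v = ∑ j, x j • b j := by
  classical
  let U : Submodule F (Fin 7 → F) :=
    { carrier := {v | v ∈ W ∧ MvPolynomial.eval v f = 0}
      add_mem' := fun {a b} ha hb => ⟨W.add_mem ha.1 hb.1,
        h13_add_closed q hq hq0 hcard f hf W hW hWc hZc a b ha.1 hb.1 ha.2 hb.2⟩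
      zero_mem' := ⟨W.zero_mem, by
        have := h13_eval_smul hf 0 0
        simpa using this⟩
      smul_mem' := fun s v hv => ⟨W.smul_mem s hv.1, by
        rw [h13_eval_smul hf, hv.2, mul_zero]⟩ }
  have hU : Module.finrank F U = 3 := by
    have h1 : Nat.card U = Nat.card F ^ Module.finrank F U :=
      Module.natCard_eq_pow_finrank (K := F) (V := U)
    have h2 : Nat.card U = q ^ 6 := hWc
    rw [h2, Nat.card_eq_fintype_card, hcard, ← pow_mul] at h1
    have := Nat.pow_right_injective (show 2 ≤ q by omega) h1
    omega
  let bb := Module.finBasisOfFinrankEq F U hU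
  have hmem : ∀ x : Fin 3 → F, ∑ j, x j • (bb j : Fin 7 → F) ∈ U := fun x =>
    Submodule.sum_mem _ fun j _ => U.smul_mem _ (bb j).2
  refine ⟨fun j => bb j, ?_, fun x => (hmem x).1, fun x => (hmem x).2, ?_⟩
  · exact bb.linearIndependent.map' U.subtype (Submodule.ker_subtype U)
  · intro v hv h0
    refine ⟨fun j => bb.repr ⟨v, hv, h0⟩ j, ?_⟩
    have := congrArg (Subtype.val) (bb.sum_repr ⟨v, hv, h0⟩)
    refine this.symm.trans ?_
    simp only [AddSubmonoidClass.coe_finsetSum, Submodule.coe_smul]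

theorem h13_L5 {F : Type} [Field F] [Fintype F] [DecidableEq F] (q : ℕ) (hq : 3 ≤ q)
    (hcard : Fintype.card F = q ^ 2) (f : MvPolynomial (Fin 7) F) (hf : f.IsHomogeneous (q + 1))
    (W : Submodule F (Fin 7 → F)) (hW : Module.finrank F W = 4)
    (hno : ∀ U : Submodule F (Fin 7 → F), Module.finrank F U = 4 →
      ∃ v ∈ U, MvPolynomial.eval v f ≠ 0)
    (hZc : Nat.card {v // v ∉ W ∧ MvPolynomial.eval v f = 0} + q ^ 7 = q ^ 13)
    (b : Fin 3 → Fin 7 → F) (hb : LinearIndependent F b)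
    (hbW : ∀ x : Fin 3 → F, ∑ j, x j • b j ∈ W)
    (hbf : ∀ x : Fin 3 → F, MvPolynomial.eval (∑ j, x j • b j) f = 0) :
    ∀ u, u ∉ W → (∃ x : Fin 3 → F, MvPolynomial.eval (u + ∑ j, x j • b j) f ≠ 0) ∧
      (h13_sub f u b).totalDegree ≤ q ∧
      (Finset.univ.filter fun x => MvPolynomial.eval x (h13_sub f u b) = 0).card = q ^ 5 := by
  classical
  have hA : ∀ u, u ∉ W → ∃ x : Fin 3 → F, MvPolynomial.eval (u + ∑ j, x j • b j) f ≠ 0 := by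
    intro u hu
    by_contra hcon
    push Not at hcon
    have hbm : ∀ j, b j ∈ W := fun j => by
      have := hbW (Pi.single j 1)
      simpa [Pi.single_apply] using this
    have hspan : Submodule.span F (Set.range b) ≤ W := by
      rw [Submodule.span_le]; rintro _ ⟨j, rfl⟩; exact hbm j
    have hli : LinearIndependent F (Fin.cons u b : Fin 4 → Fin 7 → F) := by
      rw [linearIndependent_finCons]
      exact ⟨hb, fun h => hu (hspan h)⟩
    obtain ⟨v, hv, hv0⟩ := hno (Submodule.span F (Set.range (Fin.cons u b : Fin 4 → Fin 7 → F)))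
      (by rw [finrank_span_eq_card hli]; simp)
    rw [Submodule.mem_span_range_iff_exists_fun] at hv
    obtain ⟨c, rfl⟩ := hv
    rw [Fin.sum_univ_succ] at hv0
    simp only [Fin.cons_zero, Fin.cons_succ] at hv0
    by_cases hc : c 0 = 0
    · rw [hc, zero_smul, zero_add] at hv0
      exact hv0 (hbf fun j => c j.succ)
    · have : c 0 • u + ∑ j : Fin 3, c j.succ • b j =
          c 0 • (u + ∑ j : Fin 3, ((c 0)⁻¹ * c j.succ) • b j) := by
        rw [smul_add, Finset.smul_sum]
        congr 1
        apply Finset.sum_congr rfl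
        intro j _
        rw [smul_smul, mul_inv_cancel_left₀ hc]
      rw [this, h13_eval_smul hf, hcon (fun j => (c 0)⁻¹ * c j.succ), mul_zero] at hv0
      exact hv0 rfl
  have hT : ∀ u, (h13_sub f u b).totalDegree ≤ q := by
    intro u
    apply h13_drop _ _ (h13_sub_totalDegree f u b (q + 1) hf.totalDegree_le)
      (by rw [hcard]; nlinarith)
    intro v
    rw [h13_sub_lin, h13_lin_symm hf (by rw [hcard]; nlinarith) _ _ _ le_rfl, Nat.sub_self,
          h13_lin_coeff_zero, hbf]
  have hle : ∀ u ∈ Finset.univ.filter (fun u : Fin 7 → F => u ∉ W),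
      (Finset.univ.filter fun x : Fin 3 → F =>
        MvPolynomial.eval (u + ∑ j, x j • b j) f = 0).card ≤ q ^ 5 := by
    intro u hu
    have hu' := (Finset.mem_filter.1 hu).2
    have h0 : h13_sub f u b ≠ 0 := by
      intro h
      obtain ⟨x, hx⟩ := hA u hu'
      apply hx
      rw [← h13_sub_eval, h, map_zero]
    have h1 := h13_sz _ q (hT u) h0
    simp only [h13_sub_eval, hcard] at h1
    calc _ ≤ _ := h1
      _ = q ^ 5 := by ring
  have hcompl := h13_card_compl W 4 7 hW (by simp)
  have havg := h13_avg W (fun x : Fin 3 → F => ∑ j, x j • b j) hbW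
    (fun v => MvPolynomial.eval v f = 0)
  rw [Nat.card_eq_fintype_card, Fintype.card_subtype] at hZc
  rw [hcard] at hcompl
  have hs : ∑ u ∈ Finset.univ.filter (fun u : Fin 7 → F => u ∉ W),
      (Finset.univ.filter fun x : Fin 3 → F =>
        MvPolynomial.eval (u + ∑ j, x j • b j) f = 0).card =
      ∑ u ∈ Finset.univ.filter (fun u : Fin 7 → F => u ∉ W), q ^ 5 := by
    rw [havg, Finset.sum_const, smul_eq_mul, Fintype.card_fun, hcard, Fintype.card_fin]
    set X := (Finset.univ.filter (fun v : Fin 7 → F => v ∉ W)).card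
    set Y := (Finset.univ.filter (fun v : Fin 7 → F => v ∉ W ∧ MvPolynomial.eval v f = 0)).card
    have e1 : (q ^ 2) ^ 3 * Y + q ^ 13 = q ^ 19 := by
      calc (q ^ 2) ^ 3 * Y + q ^ 13 = q ^ 6 * (Y + q ^ 7) := by ring
        _ = q ^ 19 := by rw [hZc]; ring
    have e2 : X * q ^ 5 + q ^ 13 = q ^ 19 := by
      calc X * q ^ 5 + q ^ 13 = q ^ 5 * (X + (q ^ 2) ^ 4) := by ring
        _ = q ^ 19 := by rw [hcompl]; ring
    omega
  have heq := (Finset.sum_eq_sum_iff_of_le hle).1 hs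
  intro u hu
  refine ⟨hA u hu, hT u, ?_⟩
  simp only [h13_sub_eval]
  exact heq u (by simpa using hu)


theorem h13_r0 {F : Type} [Field F] [Fintype F] (r : MvPolynomial (Fin 2) F)
    (hd : r.totalDegree ≤ Fintype.card F) (h : ∀ s, MvPolynomial.eval s r = 0) :
    ∃ α β : F, r = MvPolynomial.C α * (MvPolynomial.X 0 ^ Fintype.card F - MvPolynomial.X 0) +
      MvPolynomial.C β * (MvPolynomial.X 1 ^ Fintype.card F - MvPolynomial.X 1) := by
  classical
  set Q := Fintype.card F with hQ
  have hQ1 : 1 < Q := Fintype.one_lt_card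
  refine ⟨r.coeff (Finsupp.single 0 Q), r.coeff (Finsupp.single 1 Q), ?_⟩
  rw [← sub_eq_zero]
  set p := r - (MvPolynomial.C (r.coeff (Finsupp.single 0 Q)) *
      (MvPolynomial.X 0 ^ Q - MvPolynomial.X 0) +
      MvPolynomial.C (r.coeff (Finsupp.single 1 Q)) *
      (MvPolynomial.X 1 ^ Q - MvPolynomial.X 1)) with hp
  have hX : ∀ i : Fin 2, (MvPolynomial.X i : MvPolynomial (Fin 2) F) ^ Q =
      MvPolynomial.monomial (Finsupp.single i Q) 1 := fun i => MvPolynomial.X_pow_eq_monomial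
  have hX1 : ∀ i : Fin 2, (MvPolynomial.X i : MvPolynomial (Fin 2) F) =
      MvPolynomial.monomial (Finsupp.single i 1) 1 := fun i => rfl
  refine MvPolynomial.eq_zero_of_eval_eq_zero _ _ p ?_ ?_
  · intro v
    simp [hp, h v, hQ, FiniteField.pow_card]
  · rw [MvPolynomial.mem_restrictDegree]
    intro m hm i
    by_contra hcon
    have hpd : p.totalDegree ≤ Q := by
      rw [hp]
      have h1 : ∀ (a : F) (i : Fin 2), (MvPolynomial.C a *
          (MvPolynomial.X i ^ Q - MvPolynomial.X i) : MvPolynomial (Fin 2) F).totalDegree ≤ Q := by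
        intro a i
        refine (MvPolynomial.totalDegree_mul _ _).trans ?_
        rw [MvPolynomial.totalDegree_C, zero_add]
        refine (MvPolynomial.totalDegree_sub _ _).trans ?_
        rw [MvPolynomial.totalDegree_X_pow, MvPolynomial.totalDegree_X]
        exact max_le le_rfl hQ1.le
      refine (MvPolynomial.totalDegree_sub _ _).trans (max_le hd ?_)
      exact (MvPolynomial.totalDegree_add _ _).trans (max_le (h1 _ _) (h1 _ _))
    have h2 := (MvPolynomial.le_totalDegree hm).trans hpd
    rw [Finsupp.sum_fintype _ _ (by simp), Fin.sum_univ_two] at h2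
    rw [MvPolynomial.mem_support_iff] at hm
    apply hm
    have h01 : ∀ i j : Fin 2, ∀ a b : ℕ, a ≠ 0 → (Finsupp.single i a = Finsupp.single j b ↔
        (i = j ∧ a = b)) := by
      intro i j a b ha
      rw [Finsupp.single_eq_single_iff]
      constructor
      · rintro (h | h)
        · exact h
        · exact absurd h.1 ha
      · exact fun h => Or.inl h
    have h3 : m = Finsupp.single i Q := by
      ext j
      fin_cases i <;> fin_cases j <;> simp at hcon h2 ⊢ <;> omega
    rw [h3, hp, hX 0, hX 1, hX1 0, hX1 1]
    simp only [ MvPolynomial.coeff_sub, MvPolynomial.coeff_add, MvPolynomial.coeff_C_mul,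
      MvPolynomial.coeff_monomial, h01 _ _ _ _ (show Q ≠ 0 by omega),
      h01 _ _ _ _ one_ne_zero]
    fin_cases i <;> simp [hQ1.ne]

theorem h13_C1 {F : Type} [Field F] [Fintype F] (q : ℕ)
    (h : Polynomial (MvPolynomial (Fin 2) F)) (hm : h.Monic)
    (hn : h.natDegree = q) (hw : h13_wt MvPolynomial.totalDegree q h)
    (hs : ∀ s : Fin 2 → F, Polynomial.map (MvPolynomial.eval s) h ∣
      Polynomial.X ^ Fintype.card F - Polynomial.X) :
    ∃ (α β : F) (T : Finset F), T.card = q ∧ h = ∏ c ∈ T, (Polynomial.X -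
      Polynomial.C (MvPolynomial.C α * MvPolynomial.X 0 + MvPolynomial.C β * MvPolynomial.X 1 +
        MvPolynomial.C c)) := by
  classical
  set Q := Fintype.card F with hQ
  have hQ1 : 1 < Q := Fintype.one_lt_card
  set r := (Polynomial.X ^ Q - Polynomial.X : Polynomial (MvPolynomial (Fin 2) F)) %ₘ h with hr
  have hrw : h13_wt MvPolynomial.totalDegree Q r := by
    have ha : ∀ a b : MvPolynomial (Fin 2) F,
        (a + b).totalDegree ≤ max a.totalDegree b.totalDegree := MvPolynomial.totalDegree_add
    have hng : ∀ a : MvPolynomial (Fin 2) F, (-a).totalDegree = a.totalDegree :=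
      fun a => MvPolynomial.totalDegree_neg a
    have hmu : ∀ a b : MvPolynomial (Fin 2) F,
        (a * b).totalDegree ≤ a.totalDegree + b.totalDegree := MvPolynomial.totalDegree_mul
    have hw' : h13_wt MvPolynomial.totalDegree h.natDegree h := by rw [hn]; exact hw
    refine h13_wt_mod (fun a : MvPolynomial (Fin 2) F => a.totalDegree) ha hng hmu h hm hw' Q (Q + 1)
      _ ?_ ?_
    · refine lt_of_le_of_lt (Polynomial.degree_sub_le _ _) ?_
      rw [Polynomial.degree_X_pow, Polynomial.degree_X]
      rw [max_lt_iff]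
      constructor
      · exact_mod_cast Nat.lt_succ_self Q
      · exact_mod_cast (show 1 < Q + 1 by omega)
    · intro i hi
      beta_reduce
      rw [Polynomial.coeff_sub, Polynomial.coeff_X_pow, Polynomial.coeff_X] at hi ⊢
      by_cases h1 : i = Q
      · subst h1
        rw [if_pos rfl, if_neg (by omega), sub_zero, MvPolynomial.totalDegree_one]; omega
      · by_cases h2 : 1 = i
        · rw [if_neg h1, if_pos h2, zero_sub, MvPolynomial.totalDegree_neg,
            MvPolynomial.totalDegree_one]; omega
        · rw [if_neg h1, if_neg h2, sub_zero] at hi; exact absurd rfl hi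
  have hr0 : ∀ s i, MvPolynomial.eval s (r.coeff i) = 0 := by
    intro s i
    have h1 : Polynomial.map (MvPolynomial.eval s) r = 0 := by
      rw [hr, Polynomial.map_modByMonic _ hm, Polynomial.modByMonic_eq_zero_iff_dvd (hm.map _)]
      simpa using hs s
    rw [← Polynomial.coeff_map, h1, Polynomial.coeff_zero]
  have hrC : r = Polynomial.C (r.coeff 0) := by
    ext1 i
    rw [Polynomial.coeff_C]
    split_ifs with hi
    · rw [hi]
    · by_contra h0
      have := hrw i h0
      exact h0 (h13_poly_eq_zero _ (by omega) fun s => hr0 s i)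
  obtain ⟨α, β, hab⟩ := h13_r0 (r.coeff 0) (by
    by_cases h0 : r.coeff 0 = 0
    · rw [h0]; simp
    · have := hrw 0 h0; omega) fun s => hr0 s 0
  set ℓ : MvPolynomial (Fin 2) F := MvPolynomial.C α * MvPolynomial.X 0 +
    MvPolynomial.C β * MvPolynomial.X 1 with hℓ
  have hℓQ : ℓ ^ Q = MvPolynomial.C α * MvPolynomial.X 0 ^ Q +
      MvPolynomial.C β * MvPolynomial.X 1 ^ Q := by
    have h1 := map_add (FiniteField.frobeniusAlgHom F (MvPolynomial (Fin 2) F))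
      (MvPolynomial.C α * MvPolynomial.X 0) (MvPolynomial.C β * MvPolynomial.X 1)
    simp only [FiniteField.coe_frobeniusAlgHom] at h1
    rw [hℓ, hQ, h1, mul_pow, mul_pow, ← MvPolynomial.C_pow, ← MvPolynomial.C_pow,
      FiniteField.pow_card, FiniteField.pow_card]
  set M : Polynomial (MvPolynomial (Fin 2) F) := Polynomial.X - Polynomial.C ℓ with hM
  have hMQ : M ^ Q = Polynomial.X ^ Q - Polynomial.C (ℓ ^ Q) := by
    have h1 := map_sub (FiniteField.frobeniusAlgHom F (Polynomial (MvPolynomial (Fin 2) F)))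
      Polynomial.X (Polynomial.C ℓ)
    simp only [FiniteField.coe_frobeniusAlgHom] at h1
    rw [hM, hQ, h1, Polynomial.C_pow]
  have hprod : M ^ Q - M = ∏ c : F, (M - Polynomial.C (MvPolynomial.C c)) := by
    have h1 := congrArg (Polynomial.aeval M) (h13_prod_X_sub (F := F))
    simpa [map_prod] using h1
  have hdiv : h * ((Polynomial.X ^ Q - Polynomial.X) /ₘ h) =
      1 * ∏ c : F, (M - Polynomial.C (MvPolynomial.C c)) := by
    have h1 := Polynomial.modByMonic_add_div
      (Polynomial.X ^ Q - Polynomial.X : Polynomial (MvPolynomial (Fin 2) F)) h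
    rw [← hr, hrC, hab] at h1
    rw [one_mul, ← hprod, hMQ, hℓQ, hM, hℓ]
    rw [← sub_eq_iff_eq_add'.2 h1.symm]
    simp only [Polynomial.C_add, Polynomial.C_mul, Polynomial.C_sub]
    ring
  obtain ⟨T, U, b, c, -, -, hbc, hh, -⟩ := mul_eq_mul_prime_prod (fun c _ => by
    rw [hM, sub_sub, ← Polynomial.C_add]
    exact Polynomial.prime_X_sub_C _) hdiv
  have hbu : IsUnit b := IsUnit.of_mul_eq_one c hbc.symm
  have hmon : (∏ c ∈ T, (M - Polynomial.C (MvPolynomial.C c))).Monic := by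
    apply Polynomial.monic_prod_of_monic
    intro c _
    rw [hM, sub_sub, ← Polynomial.C_add]
    exact Polynomial.monic_X_sub_C _
  have hb1 : b = 1 := by
    apply Polynomial.Monic.eq_one_of_isUnit _ hbu
    apply Polynomial.Monic.of_mul_monic_right hmon
    rw [← hh]; exact hm
  have hh2 : h = ∏ c ∈ T, (Polynomial.X - Polynomial.C (ℓ + MvPolynomial.C c)) := by
    rw [hh, hb1, one_mul]
    apply Finset.prod_congr rfl
    intro c _
    rw [hM, sub_sub, ← Polynomial.C_add]
  refine ⟨α, β, T, ?_, hh2⟩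
  rw [← hn, hh2, Polynomial.natDegree_prod_of_monic _ _ fun c _ => Polynomial.monic_X_sub_C _]
  simp only [Polynomial.natDegree_X_sub_C, Finset.sum_const, smul_eq_mul, mul_one]


theorem h13_C2a {F : Type} [Field F] [Fintype F] [DecidableEq F] (q : ℕ) (p : Polynomial F)
    (hm : p.Monic) (hn : p.natDegree = q)
    (hz : q ≤ (Finset.univ.filter fun t => p.eval t = 0).card) :
    p ∣ Polynomial.X ^ Fintype.card F - Polynomial.X := by
  set S := Finset.univ.filter fun t => p.eval t = 0 with hS
  have h1 : (∏ c ∈ S, (Polynomial.X - Polynomial.C c)) ∣ p := by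
    apply Finset.prod_dvd_of_coprime
    · intro a _ b _ hab
      exact Polynomial.isCoprime_X_sub_C_of_isUnit_sub (sub_ne_zero.2 hab).isUnit
    · intro c hc
      rw [Polynomial.dvd_iff_isRoot]
      exact (Finset.mem_filter.1 hc).2
  have hmon : (∏ c ∈ S, (Polynomial.X - Polynomial.C c)).Monic :=
    Polynomial.monic_prod_of_monic _ _ fun c _ => Polynomial.monic_X_sub_C c
  have hdeg : (∏ c ∈ S, (Polynomial.X - Polynomial.C c)).natDegree = S.card := by
    rw [Polynomial.natDegree_prod_of_monic _ _ fun c _ => Polynomial.monic_X_sub_C c]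
    simp
  have h2 := Polynomial.eq_of_monic_of_dvd_of_natDegree_le hmon hm h1 (by rw [hdeg, hn]; exact hz)
  rw [h2, h13_prod_X_sub]
  exact Finset.prod_dvd_prod_of_subset _ _ _ (Finset.subset_univ _)

theorem h13_C2b {F : Type} [Field F] [Fintype F] (Z : (Fin 3 → F) → Prop) [DecidablePred Z] :
    (Finset.univ.filter Z).card =
      ∑ s : Fin 2 → F, (Finset.univ.filter fun t : F => Z (Fin.cons t s)).card := by
  classical
  simp only [Finset.card_filter]
  rw [← Equiv.sum_comp (Fin.consEquiv (fun _ : Fin 3 => F)) (fun x => if Z x then 1 else 0),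
    Fintype.sum_prod_type_right]
  rfl

theorem h13_C2 {F : Type} [Field F] [Fintype F] [DecidableEq F] (q : ℕ)
    (hq1 : q + 1 < Fintype.card F) (P : MvPolynomial (Fin 3) F) (hd : P.totalDegree ≤ q)
    (hκ : (h13_lin P 0 (Pi.single 0 1)).coeff q ≠ 0)
    (hz : (Finset.univ.filter fun x => MvPolynomial.eval x P = 0).card =
      q * Fintype.card F ^ 2) :
    ∃ (α β κ : F) (T : Finset F), κ ≠ 0 ∧ T.card = q ∧ ∀ x, MvPolynomial.eval x P =
      κ * ∏ c ∈ T, (x 0 - (α * x 1 + β * x 2 + c)) := by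
  set g := MvPolynomial.finSuccEquiv F 2 P with hg
  have hev : ∀ t s, MvPolynomial.eval (Fin.cons t s : Fin 3 → F) P =
      Polynomial.eval t (Polynomial.map (MvPolynomial.eval s) g) := fun t s =>
    MvPolynomial.eval_eq_eval_mv_eval' s t P
  have hgw : ∀ i, g.coeff i ≠ 0 → (g.coeff i).totalDegree + i ≤ q := by
    intro i hi
    exact (MvPolynomial.totalDegree_coeff_finSuccEquiv_add_le P i hi).trans hd
  have hgn : g.natDegree ≤ q := by
    rw [Polynomial.natDegree_le_iff_coeff_eq_zero]
    intro i hi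
    by_contra h
    have := hgw i h
    omega
  obtain ⟨a, ha⟩ : ∃ a, g.coeff q = MvPolynomial.C a := by
    by_cases h : g.coeff q = 0
    · exact ⟨0, by rw [h, map_zero]⟩
    · have := hgw q h
      exact ⟨_, MvPolynomial.totalDegree_eq_zero_iff_eq_C.1 (by omega)⟩
  have ha0 : a ≠ 0 := by
    have h1 : h13_lin P 0 (Pi.single 0 1) = Polynomial.map (MvPolynomial.eval 0) g := by
      apply h13_poly_eq _ _ q hq1
      · exact h13_lin_natDegree _ _ _ _ hd
      · exact Polynomial.natDegree_map_le.trans hgn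
      · intro s _
        rw [h13_lin_eval, ← hev]
        congr 2
        funext i
        refine Fin.cases ?_ (fun j => ?_) i <;> simp
    rw [h1, Polynomial.coeff_map, ha, MvPolynomial.eval_C] at hκ
    exact hκ
  set h := Polynomial.C (MvPolynomial.C a⁻¹) * g with hh
  have hgh : g = Polynomial.C (MvPolynomial.C a) * h := by
    rw [hh, ← mul_assoc, ← Polynomial.C_mul, ← MvPolynomial.C_mul, mul_inv_cancel₀ ha0]
    simp
  have hhq : h.coeff q = 1 := by
    rw [hh, Polynomial.coeff_C_mul, ha, ← MvPolynomial.C_mul, inv_mul_cancel₀ ha0]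
    simp
  have hhn' : h.natDegree ≤ q := by
    rw [hh]; exact (Polynomial.natDegree_C_mul_le _ _).trans hgn
  have hm : h.Monic := Polynomial.monic_of_natDegree_le_of_coeff_eq_one q hhn' hhq
  have hhn : h.natDegree = q := by
    apply le_antisymm hhn'
    apply Polynomial.le_natDegree_of_ne_zero
    rw [hhq]; exact one_ne_zero
  have hw : h13_wt MvPolynomial.totalDegree q h := by
    intro i hi
    rw [hh, Polynomial.coeff_C_mul] at hi ⊢
    have h1 := hgw i (right_ne_zero_of_mul hi)
    have h2 := MvPolynomial.totalDegree_mul (MvPolynomial.C a⁻¹) (g.coeff i)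
    rw [MvPolynomial.totalDegree_C] at h2
    omega
  have hev2 : ∀ t s, MvPolynomial.eval (Fin.cons t s : Fin 3 → F) P =
      a * Polynomial.eval t (Polynomial.map (MvPolynomial.eval s) h) := by
    intro t s
    rw [hev, hgh]
    simp
  have hsum := h13_C2b (fun x : Fin 3 → F => MvPolynomial.eval x P = 0)
  rw [hz] at hsum
  have hn2 : ∀ s, (Polynomial.map (MvPolynomial.eval s) h).natDegree = q := fun s => by
    rw [hm.natDegree_map, hhn]
  have hle : ∀ s ∈ (Finset.univ : Finset (Fin 2 → F)),
      (Finset.univ.filter fun t : F => MvPolynomial.eval (Fin.cons t s : Fin 3 → F) P = 0).card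
        ≤ q := by
    intro s _
    rw [← hn2 s]
    refine le_trans ?_ (Polynomial.card_roots' _)
    refine le_trans ?_ (Multiset.toFinset_card_le _)
    apply Finset.card_le_card
    intro t ht
    rw [Finset.mem_filter, hev2] at ht
    rw [Multiset.mem_toFinset, Polynomial.mem_roots (hm.map _).ne_zero]
    exact (mul_eq_zero.1 ht.2).resolve_left ha0
  have hs2 : ∑ s : Fin 2 → F, (Finset.univ.filter fun t : F =>
      MvPolynomial.eval (Fin.cons t s : Fin 3 → F) P = 0).card = ∑ s : Fin 2 → F, q := by
    rw [← hsum, Finset.sum_const, Finset.card_univ, Fintype.card_fun, Fintype.card_fin,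
      smul_eq_mul, mul_comm]
  have heq := (Finset.sum_eq_sum_iff_of_le hle).1 hs2
  obtain ⟨α, β, T, hT, hprod⟩ := h13_C1 q h hm hhn hw (by
    intro s
    apply h13_C2a q _ (hm.map _) (hn2 s)
    have := heq s (Finset.mem_univ s)
    simp only [hev2, mul_eq_zero, ha0, false_or] at this
    exact this.ge)
  refine ⟨α, β, a, T, ha0, hT, ?_⟩
  intro x
  have hx : x = Fin.cons (x 0) ![x 1, x 2] := by
    funext i; fin_cases i <;> rfl
  have h3 : MvPolynomial.eval x P = MvPolynomial.eval (Fin.cons (x 0) ![x 1, x 2] : Fin 3 → F) P := by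
    rw [← hx]
  rw [h3, hev2, hprod, Polynomial.map_prod, Polynomial.eval_prod]
  simp

theorem h13_C3 {F : Type} [Field F] [Fintype F] [DecidableEq F] (q : ℕ) (hq : 3 ≤ q)
    (hcard : Fintype.card F = q ^ 2) (P : MvPolynomial (Fin 3) F) (hd : P.totalDegree ≤ q)
    (P0 : Fin 3 → F) (hP0 : MvPolynomial.eval P0 P ≠ 0)
    (hz : (Finset.univ.filter fun x => MvPolynomial.eval x P = 0).card = q ^ 5) :
    ∃ v : Fin 3 → F, v ≠ 0 ∧ (h13_lin P P0 v).coeff q ≠ 0 := by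
  have hdc := h13_dc (F := F) (fun x : Fin 3 → F => MvPolynomial.eval x P = 0) P0
  have h1 : (Finset.univ.filter fun x => x ≠ P0 ∧ MvPolynomial.eval x P = 0) =
      (Finset.univ.filter fun x => MvPolynomial.eval x P = 0) := by
    apply Finset.filter_congr
    intro x _
    constructor
    · exact fun h => h.2
    · exact fun h => ⟨fun hx => hP0 (hx ▸ h), h⟩
  rw [h1, hz] at hdc
  by_contra hcon
  push Not at hcon
  have hle : ∀ v ∈ Finset.univ.filter (fun v : Fin 3 → F => v ≠ 0),
      (Finset.univ.filter fun s : F => s ≠ 0 ∧ MvPolynomial.eval (P0 + s • v) P = 0).card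
        ≤ q - 1 := by
    intro v hv
    have h0 := hcon v (Finset.mem_filter.1 hv).2
    have hne : h13_lin P P0 v ≠ 0 := by
      intro h
      apply hP0
      rw [← h13_lin_coeff_zero P P0 v, h, Polynomial.coeff_zero]
    have hn := h13_lin_natDegree P P0 v q hd
    have hn2 : (h13_lin P P0 v).natDegree ≤ q - 1 := by
      rcases Nat.lt_or_ge (h13_lin P P0 v).natDegree q with h | h
      · omega
      · have : (h13_lin P P0 v).natDegree = q := le_antisymm hn h
        rw [← this] at h0
        exact absurd (Polynomial.leadingCoeff_eq_zero.1 h0) hne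
    refine le_trans ?_ hn2
    refine le_trans ?_ (Polynomial.card_roots' _)
    refine le_trans ?_ (Multiset.toFinset_card_le _)
    apply Finset.card_le_card
    intro s hs
    rw [Multiset.mem_toFinset, Polynomial.mem_roots hne, Polynomial.IsRoot, h13_lin_eval]
    exact (Finset.mem_filter.1 hs).2.2
  have h2 := hdc.trans (Finset.sum_le_card_nsmul _ _ _ hle)
  have h3 : (Finset.univ.filter (fun v : Fin 3 → F => v ≠ 0)).card = q ^ 6 - 1 := by
    rw [Finset.filter_ne' Finset.univ, Finset.card_erase_of_mem (Finset.mem_univ _),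
      Finset.card_univ, Fintype.card_fun, hcard, Fintype.card_fin, ← pow_mul]
  rw [h3, hcard, smul_eq_mul] at h2
  obtain ⟨k, rfl⟩ : ∃ k, q = k + 1 := ⟨q - 1, by omega⟩
  have e1 : 1 ≤ (k + 1) ^ 2 := Nat.one_le_pow _ _ (by omega)
  have e2 : 1 ≤ (k + 1) ^ 6 := Nat.one_le_pow _ _ (by omega)
  zify [e1, e2] at h2
  have hk : (2 : ℤ) ≤ k := by exact_mod_cast (by omega : 2 ≤ k)
  have h4 : (((k : ℤ) + 1) ^ 2 - 1) * (k + 1) ^ 5 - (((k : ℤ) + 1) ^ 6 - 1) * k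
    = k * ((k + 1) ^ 5 + 1) := by ring
  have h5 : (0 : ℤ) < k * ((k + 1) ^ 5 + 1) := by positivity
  simp only [Nat.add_sub_cancel] at h2
  linarith


theorem h13_C {F : Type} [Field F] [Fintype F] [DecidableEq F] (q : ℕ) (hq : 3 ≤ q)
    (hcard : Fintype.card F = q ^ 2) (hroot : ∀ κ : F, ∃ l : F, l ^ q = κ)
    (P : MvPolynomial (Fin 3) F) (hd : P.totalDegree ≤ q)
    (P0 : Fin 3 → F) (hP0 : MvPolynomial.eval P0 P ≠ 0)
    (hz : (Finset.univ.filter fun x => MvPolynomial.eval x P = 0).card = q ^ 5) :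
    ∃ (L : (Fin 3 → F) →ₗ[F] F) (T : Finset F), L ≠ 0 ∧ T.card = q ∧
      ∀ y, MvPolynomial.eval y P = ∏ c ∈ T, (L y - c) := by
  obtain ⟨v, hv0, hv⟩ := h13_C3 q hq hcard P hd P0 hP0 hz
  have he0 : (Pi.single 0 1 : Fin 3 → F) ≠ 0 := by
    intro h
    have := congrFun h 0
    simp at this
  obtain ⟨A, hA⟩ := Submodule.exists_linearEquiv_restrict_eq
    ((LinearEquiv.toSpanNonzeroSingleton F (Fin 3 → F) _ he0).symm.trans
      (LinearEquiv.toSpanNonzeroSingleton F (Fin 3 → F) v hv0))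
  have hAv : A (Pi.single 0 1) = v := by
    have := hA (LinearEquiv.toSpanNonzeroSingleton F (Fin 3 → F) _ he0 1)
    rw [LinearEquiv.trans_apply, LinearEquiv.symm_apply_apply] at this
    simpa using this.symm
  set b : Fin 3 → Fin 3 → F := fun j => A (Pi.single j 1) with hb
  have hAx : ∀ x : Fin 3 → F, ∑ j, x j • b j = A x := by
    intro x
    simp only [hb, ← map_smul, ← map_sum]
    congr 1
    funext i
    simp [Pi.single_apply]
  have hev : ∀ x, MvPolynomial.eval x (h13_sub P P0 b) = MvPolynomial.eval (P0 + A x) P := by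
    intro x; rw [h13_sub_eval, hAx]
  obtain ⟨α, β, κ, T, hκ, hT, hP⟩ := h13_C2 q (by rw [hcard]; nlinarith) (h13_sub P P0 b)
    (h13_sub_totalDegree P P0 b q hd)
    (by
      rw [h13_sub_lin, hAx, hAx, hAv, map_zero, add_zero]; exact hv)
    (by
      rw [hcard, show q * (q ^ 2) ^ 2 = q ^ 5 by ring, ← hz]
      apply Finset.card_bij' (fun x _ => P0 + A x) (fun y _ => A.symm (y - P0))
      · intro x hx
        simpa [hev] using hx
      · intro y hy
        simpa [hev] using hy
      · intro x _; simp
      · intro y _; simp)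
  obtain ⟨l, hl⟩ := hroot κ
  have hl0 : l ≠ 0 := by
    rintro rfl
    rw [zero_pow (by omega)] at hl
    exact hκ hl.symm
  let L0 : (Fin 3 → F) →ₗ[F] F := LinearMap.proj 0 - α • LinearMap.proj 1 - β • LinearMap.proj 2
  have hL0 : ∀ x, L0 x = x 0 - α * x 1 - β * x 2 := fun x => by simp [L0]
  refine ⟨l • (L0 ∘ₗ A.symm.toLinearMap), T.image fun c => l * (L0 (A.symm P0) + c), ?_, ?_, ?_⟩
  · intro h
    have := congrArg (fun M => M (A (Pi.single 0 1))) h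
    simp [hL0, hl0] at this
  · rw [Finset.card_image_of_injective, hT]
    intro c d h
    simpa [hl0] using h
  · intro y
    have hy : y = P0 + A (A.symm (y - P0)) := by simp
    rw [Finset.prod_image (by
      intro c _ d _ h
      simpa [hl0] using h)]
    conv_lhs => rw [hy, ← hev, hP, ← hl, ← hT, ← Finset.prod_const, ← Finset.prod_mul_distrib]
    apply Finset.prod_congr rfl
    intro c _
    have h1 : L0 (A.symm (y - P0)) = L0 (A.symm y) - L0 (A.symm P0) := by simp
    have h2 := hL0 (A.symm (y - P0))
    simp only [LinearMap.smul_apply, LinearMap.comp_apply, LinearEquiv.coe_coe, smul_eq_mul]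
    linear_combination l * (h1 - h2)

/-- the normal form of `f` on a translate of the plane -/
theorem h13_L6 {F : Type} [Field F] [Fintype F] (q : ℕ) (hq : 3 ≤ q) (hq0 : (q : F) = 0)
    (hcard : Fintype.card F = q ^ 2) (hroot : ∀ κ : F, ∃ l : F, l ^ q = κ)
    (f : MvPolynomial (Fin 7) F) (hf : f.IsHomogeneous (q + 1))
    (W : Submodule F (Fin 7 → F)) (hW : Module.finrank F W = 4)
    (hno : ∀ U : Submodule F (Fin 7 → F), Module.finrank F U = 4 →
      ∃ v ∈ U, MvPolynomial.eval v f ≠ 0)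
    (hWc : Nat.card {v // v ∈ W ∧ MvPolynomial.eval v f = 0} = q ^ 6)
    (hZc : Nat.card {v // v ∉ W ∧ MvPolynomial.eval v f = 0} + q ^ 7 = q ^ 13) :
    ∃ B : (Fin 3 → F) →ₗ[F] (Fin 7 → F), (∀ x, B x ∈ W) ∧
      (∀ x, MvPolynomial.eval (B x) f = 0) ∧
      (∀ v ∈ W, MvPolynomial.eval v f = 0 → ∃ x, v = B x) ∧
      ∀ u, u ∉ W → ∃ (L : (Fin 3 → F) →ₗ[F] F) (G : Polynomial F), L ≠ 0 ∧ G.natDegree = q ∧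
        G.Monic ∧ (∃ s t, s ≠ t ∧ G.eval s = 0 ∧ G.eval t = 0) ∧
        ∀ x, MvPolynomial.eval (u + B x) f = G.eval (L x) := by
  classical
  obtain ⟨b, hb, hbW, hbf, hbs⟩ := h13_L4 q hq hq0 hcard f hf W hW hWc hZc
  have h5 := h13_L5 q hq hcard f hf W hW hno hZc b hb hbW hbf
  refine ⟨Fintype.linearCombination F b, fun x => ?_, fun x => ?_, fun v hv h0 => ?_, ?_⟩
  · rw [Fintype.linearCombination_apply]; exact hbW x
  · rw [Fintype.linearCombination_apply]; exact hbf x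
  · obtain ⟨x, hx⟩ := hbs v hv h0
    exact ⟨x, by rw [Fintype.linearCombination_apply]; exact hx⟩
  · intro u hu
    obtain ⟨⟨P0, hP0⟩, hd, hz⟩ := h5 u hu
    obtain ⟨L, T, hL, hT, hP⟩ := h13_C q hq hcard hroot (h13_sub f u b) hd P0
      (by rw [h13_sub_eval]; exact hP0) hz
    refine ⟨L, ∏ c ∈ T, (Polynomial.X - Polynomial.C c), hL, ?_, ?_, ?_, ?_⟩
    · rw [Polynomial.natDegree_prod_of_monic _ _ fun c _ => Polynomial.monic_X_sub_C c]
      simp [hT]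
    · exact Polynomial.monic_prod_of_monic _ _ fun c _ => Polynomial.monic_X_sub_C c
    · obtain ⟨s, hs, t, ht, hst⟩ := Finset.one_lt_card.1 (show 1 < T.card by omega)
      refine ⟨s, t, hst, ?_, ?_⟩ <;> rw [Polynomial.eval_prod]
      · exact Finset.prod_eq_zero hs (by simp)
      · exact Finset.prod_eq_zero ht (by simp)
    · intro x
      rw [Fintype.linearCombination_apply, ← h13_sub_eval, hP, Polynomial.eval_prod]
      simp


theorem h13_bi {F : Type} [Field F] {n : ℕ} (f : MvPolynomial (Fin n) F) (v a b : Fin n → F) :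
    ∀ k, ∃ P : Polynomial F, P.natDegree ≤ k ∧
      ∀ s, P.eval s = (h13_lin f v (a + s • b)).coeff k := by
  induction f using MvPolynomial.induction_on with
  | C c =>
    intro k
    refine ⟨Polynomial.C ((Polynomial.C c).coeff k), ?_, ?_⟩
    · rw [Polynomial.natDegree_C]; exact Nat.zero_le _
    · intro s
      simp [h13_lin]
  | add p r hp hr =>
    intro k
    obtain ⟨P, hP, hP2⟩ := hp k
    obtain ⟨R, hR, hR2⟩ := hr k
    refine ⟨P + R, (Polynomial.natDegree_add_le _ _).trans (max_le hP hR), ?_⟩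
    intro s
    rw [Polynomial.eval_add, hP2, hR2]
    simp [h13_lin]
  | mul_X p i hp =>
    intro k
    have hlin : ∀ w, h13_lin (p * MvPolynomial.X i) v w =
        h13_lin p v w * Polynomial.C (v i) + h13_lin p v w * Polynomial.C (w i) * Polynomial.X := by
      intro w
      simp only [h13_lin, map_mul, MvPolynomial.aeval_X]
      ring
    cases k with
    | zero =>
      obtain ⟨P, hP, hP2⟩ := hp 0
      refine ⟨P * Polynomial.C (v i), (Polynomial.natDegree_mul_C_le _ _).trans hP, ?_⟩
      intro s
      rw [hlin, Polynomial.eval_mul, hP2]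
      simp
    | succ k =>
      obtain ⟨P, hP, hP2⟩ := hp (k + 1)
      obtain ⟨R, hR, hR2⟩ := hp k
      refine ⟨P * Polynomial.C (v i) + R * (Polynomial.C (a i) + Polynomial.C (b i) * Polynomial.X),
        ?_, ?_⟩
      · refine (Polynomial.natDegree_add_le _ _).trans (max_le ?_ ?_)
        · exact (Polynomial.natDegree_mul_C_le _ _).trans hP
        · refine Polynomial.natDegree_mul_le.trans ?_
          have : (Polynomial.C (a i) + Polynomial.C (b i) * Polynomial.X).natDegree ≤ 1 := by
            compute_degree
          omega
      · intro s
        rw [hlin]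
        rw [Polynomial.coeff_add, Polynomial.coeff_mul_C, Polynomial.coeff_mul_X,
          Polynomial.coeff_mul_C]
        simp only [Polynomial.eval_add, Polynomial.eval_mul, Polynomial.eval_C, Polynomial.eval_X,
          hP2, hR2, Pi.add_apply, Pi.smul_apply, smul_eq_mul]
        ring

theorem h13_indep {F : Type} [Field F] (L1 L2 : (Fin 3 → F) →ₗ[F] F) (h1 : L1 ≠ 0) (h2 : L2 ≠ 0) :
    ∃ (M : (Fin 3 → F) →ₗ[F] F) (k : Fin 3 → F), M k = 1 ∧ L1 k = 0 ∧ L2 k = 0 ∧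
      (∃ x, L1 x = 1 ∧ M x = 0) ∧ (∃ x, L2 x = 1 ∧ M x = 0) := by
  have hk : LinearMap.ker (L1.prod L2) ≠ ⊥ := by
    apply LinearMap.ker_ne_bot_of_finrank_lt
    simp
  obtain ⟨k, hk, hk0⟩ := Submodule.exists_mem_ne_zero_of_ne_bot hk
  obtain ⟨i, hi⟩ := Function.ne_iff.1 hk0
  replace hk : L1 k = 0 ∧ L2 k = 0 := Prod.mk_eq_zero.1 hk
  have hMk : ((k i)⁻¹ • LinearMap.proj i : (Fin 3 → F) →ₗ[F] F) k = 1 := by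
    simpa using inv_mul_cancel₀ hi
  have key : ∀ L : (Fin 3 → F) →ₗ[F] F, L ≠ 0 → L k = 0 →
      ∃ x, L x = 1 ∧ ((k i)⁻¹ • LinearMap.proj i : (Fin 3 → F) →ₗ[F] F) x = 0 := by
    intro L hL hLk
    obtain ⟨y, hy⟩ := LinearMap.surjective hL 1
    refine ⟨y - (((k i)⁻¹ • LinearMap.proj i : (Fin 3 → F) →ₗ[F] F) y) • k, ?_, ?_⟩
    · rw [map_sub, map_smul, hLk, hy]; simp
    · rw [map_sub, map_smul, hMk]; simp
  exact ⟨_, k, hMk, hk.1, hk.2, key L1 h1 hk.1, key L2 h2 hk.2⟩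

theorem h13_L7 {F : Type} [Field F] [Fintype F] (q : ℕ) (hq : 3 ≤ q)
    (hcard : Fintype.card F = q ^ 2) (φ : F →+* F) (hφ : ∀ x, φ x = x ^ q)
    (hφφ : ∀ x, φ (φ x) = x)
    (f : MvPolynomial (Fin 7) F) (hf : f.IsHomogeneous (q + 1))
    (W : Submodule F (Fin 7 → F)) (hW : Module.finrank F W = 4)
    (B : (Fin 3 → F) →ₗ[F] (Fin 7 → F))
    (hG : ∀ u, u ∉ W → ∃ (L : (Fin 3 → F) →ₗ[F] F) (G : Polynomial F), L ≠ 0 ∧ G.natDegree = q ∧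
        G.Monic ∧ (∃ s t, s ≠ t ∧ G.eval s = 0 ∧ G.eval t = 0) ∧
        ∀ x, MvPolynomial.eval (u + B x) f = G.eval (L x)) :
    ∃ Λ : (Fin 7 → F) → ((Fin 3 → F) →ₗ[F] F),
      (∀ u z s x, Λ (u + s • z) x = Λ u x + s ^ q * Λ z x) ∧
      (∀ ψ, ∃ z, Λ z = ψ) ∧ (∀ u, u ∉ W ↔ Λ u ≠ 0) ∧
      ∀ u, u ∉ W → ∃ G : Polynomial F, G.natDegree = q ∧ G.Monic ∧
        (∃ s t, s ≠ t ∧ G.eval s = 0 ∧ G.eval t = 0) ∧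
        (∀ x, MvPolynomial.eval (u + B x) f = G.eval (Λ u x)) ∧
        ∀ x j, (h13_lin f u (B x)).coeff j = G.coeff j * Λ u x ^ j := by
  have hcq : q + 1 + 1 < Fintype.card F := by rw [hcard]; nlinarith
  have hco : ∀ u (L : (Fin 3 → F) →ₗ[F] F) (G : Polynomial F), G.natDegree = q →
      (∀ x, MvPolynomial.eval (u + B x) f = G.eval (L x)) →
      ∀ x j, (h13_lin f u (B x)).coeff j = G.coeff j * L x ^ j := by
    intro u L G hn h x j
    have h1 : h13_lin f u (B x) = G.comp (Polynomial.C (L x) * Polynomial.X) := by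
      apply h13_poly_eq _ _ (q + 1) hcq
      · exact h13_lin_natDegree _ _ _ _ hf.totalDegree_le
      · refine Polynomial.natDegree_comp_le.trans ?_
        rw [hn]
        have : (Polynomial.C (L x) * Polynomial.X).natDegree ≤ 1 := by compute_degree
        nlinarith
      · intro s _
        rw [h13_lin_eval, ← map_smul, h, map_smul, Polynomial.eval_comp, Polynomial.eval_mul,
          Polynomial.eval_C, Polynomial.eval_X, smul_eq_mul, mul_comm]
    rw [h1, Polynomial.comp_C_mul_X_coeff]
  let A : (Fin 7 → F) →ₗ[F] (Fin 3 → F) :=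
    LinearMap.pi fun k => ∑ i, MvPolynomial.eval (B (Pi.single k 1)) (MvPolynomial.pderiv i f) •
      LinearMap.proj i
  have hA : ∀ u k, A u k = (h13_lin f (B (Pi.single k 1)) u).coeff 1 := by
    intro u k
    rw [h13_lin_coeff_one]
    simp [A, mul_comm]
  have hAL : ∀ u (L : (Fin 3 → F) →ₗ[F] F) (G : Polynomial F), G.natDegree = q → G.Monic →
      (∀ x, MvPolynomial.eval (u + B x) f = G.eval (L x)) →
      ∀ k, A u k = L (Pi.single k 1) ^ q := by
    intro u L G hn hm h k
    have h1 := hco u L G hn h (Pi.single k 1) q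
    have hGq : G.coeff q = 1 := by rw [← hn]; exact hm
    rw [h13_lin_symm hf hcq _ _ _ (by omega), show q + 1 - q = 1 by omega, ← hA, hGq, one_mul] at h1
    exact h1
  have hLx : ∀ (L : (Fin 3 → F) →ₗ[F] F) x, L x = ∑ k, x k * L (Pi.single k 1) := by
    intro L x
    rw [LinearMap.pi_apply_eq_sum_univ L x]
    apply Finset.sum_congr rfl
    intro k _
    rw [smul_eq_mul]
    congr 2
    funext j
    simp [Pi.single_apply, eq_comm]
  have hAne : ∀ u, u ∉ W → A u ≠ 0 := by
    intro u hu h0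
    obtain ⟨L, G, hL, hn, hm, -, h⟩ := hG u hu
    apply hL
    ext1 k
    have h1 := hAL u L G hn hm h
    ext
    have h2 := h1 k
    rw [h0] at h2
    simpa using pow_eq_zero_iff (by omega : q ≠ 0) |>.1 h2.symm
  have hker : LinearMap.ker A ≤ W := by
    intro u hu
    by_contra h
    exact hAne u h hu
  have hrn := LinearMap.finrank_range_add_finrank_ker A
  have hr3 : Module.finrank F (LinearMap.range A) ≤ 3 := by
    have := Submodule.finrank_le (LinearMap.range A)
    simpa using this
  have hk4 := Submodule.finrank_mono hker
  rw [hW] at hk4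
  have h7 : Module.finrank F (Fin 7 → F) = 7 := by simp
  rw [h7] at hrn
  have hkW : LinearMap.ker A = W := Submodule.eq_of_le_of_finrank_le hker (by omega)
  have hsurj : LinearMap.range A = ⊤ := Submodule.eq_top_of_finrank_eq (by
    rw [Module.finrank_fin_fun]; omega)
  let Λ : (Fin 7 → F) → ((Fin 3 → F) →ₗ[F] F) := fun u =>
    ∑ k, φ (A u k) • LinearMap.proj k
  have hΛ : ∀ u x, Λ u x = ∑ k, φ (A u k) * x k := by
    intro u x
    simp [Λ]
  have hΛL : ∀ u (L : (Fin 3 → F) →ₗ[F] F) (G : Polynomial F), G.natDegree = q → G.Monic →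
      (∀ x, MvPolynomial.eval (u + B x) f = G.eval (L x)) → Λ u = L := by
    intro u L G hn hm h
    apply LinearMap.ext
    intro x
    rw [hΛ, hLx L x]
    apply Finset.sum_congr rfl
    intro k _
    rw [hAL u L G hn hm h, ← hφ, hφφ, mul_comm]
  have hiff : ∀ u, u ∉ W ↔ Λ u ≠ 0 := by
    intro u
    constructor
    · intro hu
      obtain ⟨L, G, hL, hn, hm, -, h⟩ := hG u hu
      rw [hΛL u L G hn hm h]; exact hL
    · intro h hu
      apply h
      rw [← hkW] at hu
      have hu' : A u = 0 := hu
      apply LinearMap.ext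
      intro x
      rw [hΛ, hu']
      simp
  refine ⟨Λ, ?_, ?_, hiff, ?_⟩
  · intro u z s x
    simp only [hΛ, map_add, map_smul, Pi.add_apply, Pi.smul_apply, smul_eq_mul, map_mul, ← hφ]
    rw [Finset.mul_sum, ← Finset.sum_add_distrib]
    apply Finset.sum_congr rfl
    intro k _
    ring
  · intro ψ
    obtain ⟨z, hz⟩ := LinearMap.range_eq_top.1 hsurj (fun k => φ (ψ (Pi.single k 1)))
    refine ⟨z, ?_⟩
    apply LinearMap.ext
    intro x
    rw [hΛ, hLx ψ x]
    apply Finset.sum_congr rfl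
    intro k _
    rw [hz, hφφ, mul_comm]
  · intro u hu
    obtain ⟨L, G, hL, hn, hm, hst, h⟩ := hG u hu
    refine ⟨G, hn, hm, hst, ?_, ?_⟩
    · rw [hΛL u L G hn hm h]; exact h
    · rw [hΛL u L G hn hm h]; exact hco u L G hn h


theorem h13_L8a {F : Type} [Field F] [Fintype F] (q : ℕ) (hq : 3 ≤ q)
    (hcard : Fintype.card F = q ^ 2) (j : ℕ) (hj1 : 1 ≤ j) (hjq : j < q)
    (P D : Polynomial F) (hP : P.natDegree ≤ q + 1 - j) (hD : D.natDegree ≤ q + 1 - j)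
    (h : ∀ s, D.eval s = P.eval s * (s ^ q) ^ j) : (2 ≤ j → P = 0) ∧ P.natDegree = 0 := by
  have hb : q + 1 - j + q * j < q ^ 2 := by
    obtain ⟨k, rfl⟩ : ∃ k, q = j + 1 + k := ⟨q - 1 - j, by omega⟩
    rw [show j + 1 + k + 1 - j = k + 2 by omega]
    nlinarith
  have heq : P * Polynomial.X ^ (q * j) = D := by
    rw [← sub_eq_zero]
    apply Polynomial.eq_zero_of_natDegree_lt_card_of_eval_eq_zero _ (Function.injective_id)
    · intro s
      rw [Polynomial.eval_sub, id, h]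
      simp [pow_mul]
    · rw [hcard]
      refine lt_of_le_of_lt ?_ hb
      refine (Polynomial.natDegree_sub_le _ _).trans (max_le ?_ (by omega))
      refine Polynomial.natDegree_mul_le.trans ?_
      rw [Polynomial.natDegree_X_pow]
      omega
  by_cases h0 : P = 0
  · exact ⟨fun _ => h0, by rw [h0, Polynomial.natDegree_zero]⟩
  · have h1 : P.natDegree + q * j ≤ q + 1 - j := by
      rw [← Polynomial.natDegree_mul_X_pow (q * j) h0, heq]
      exact hD
    constructor
    · intro h2
      exfalso
      have : q * 2 ≤ q * j := Nat.mul_le_mul_left q h2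
      omega
    · have : q * 1 ≤ q * j := Nat.mul_le_mul_left q hj1
      omega

theorem h13_L8 {F : Type} [Field F] [Fintype F] (q : ℕ) (hq : 3 ≤ q)
    (hcard : Fintype.card F = q ^ 2)
    (f : MvPolynomial (Fin 7) F) (hf : f.IsHomogeneous (q + 1))
    (W : Submodule F (Fin 7 → F))
    (B : (Fin 3 → F) →ₗ[F] (Fin 7 → F))
    (Λ : (Fin 7 → F) → ((Fin 3 → F) →ₗ[F] F))
    (hΛ : ∀ u z s x, Λ (u + s • z) x = Λ u x + s ^ q * Λ z x)
    (hsur : ∀ ψ, ∃ z, Λ z = ψ) (hiff : ∀ u, u ∉ W ↔ Λ u ≠ 0)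
    (G : (Fin 7 → F) → Polynomial F)
    (hco : ∀ u, u ∉ W → ∀ x j, (h13_lin f u (B x)).coeff j = (G u).coeff j * Λ u x ^ j) :
    (∀ u, u ∉ W → ∀ j, 2 ≤ j → j < q → (G u).coeff j = 0) ∧
    ∃ c, ∀ u, u ∉ W → (G u).coeff 1 = c := by
  have hcq : q + 1 + 1 < Fintype.card F := by rw [hcard]; nlinarith
  have hΛ0 : ∀ u x, Λ u x ≠ 0 → u ∉ W := by
    intro u x h
    rw [hiff]
    intro h0
    rw [h0] at h
    exact h rfl
  have key : ∀ y z x x', Λ y x' = 1 → Λ z x' = 0 → Λ y x = 0 → Λ z x = 1 → ∀ j, 1 ≤ j → j < q →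
      (2 ≤ j → (G y).coeff j = 0) ∧ (G (y + z)).coeff j = (G y).coeff j := by
    intro y z x x' h1 h2 h3 h4 j hj1 hjq
    have hmem : ∀ s : F, y + s • z ∉ W := by
      intro s
      apply hΛ0 _ x'
      rw [hΛ, h1, h2, mul_zero, add_zero]
      exact one_ne_zero
    obtain ⟨P, hP, hPe⟩ := h13_bi f (B x') y z (q + 1 - j)
    obtain ⟨D, hD, hDe⟩ := h13_bi f (B x) y z (q + 1 - j)
    have hPG : ∀ s, P.eval s = (G (y + s • z)).coeff j := by
      intro s
      rw [hPe, ← h13_lin_symm hf hcq _ _ _ (by omega), hco _ (hmem s), hΛ, h1, h2, mul_zero,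
        add_zero, one_pow, mul_one]
    have hDG : ∀ s, D.eval s = P.eval s * (s ^ q) ^ j := by
      intro s
      rw [hDe, ← h13_lin_symm hf hcq _ _ _ (by omega), hco _ (hmem s), hΛ, h3, h4, mul_one,
        zero_add, hPG]
    obtain ⟨e1, e2⟩ := h13_L8a q hq hcard j hj1 hjq P D hP hD hDG
    have hy : (G y).coeff j = P.eval 0 := by rw [hPG, zero_smul, add_zero]
    have hyz : (G (y + z)).coeff j = P.eval 1 := by rw [hPG, one_smul]
    constructor
    · intro hj2
      rw [hy, e1 hj2, Polynomial.eval_zero]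
    · rw [hy, hyz, Polynomial.eq_C_of_natDegree_eq_zero e2]
      simp
  have conn : ∀ y z k, Λ y k = 0 → Λ z k = 1 → (∃ x, Λ y x = 1 ∧ Λ z x = 0) →
      (G z).coeff 1 = (G y).coeff 1 := by
    rintro y z k h1 h2 ⟨x, h3, h4⟩
    have hd : ∀ w, Λ (z - y) w = Λ z w - Λ y w := by
      intro w
      have := hΛ y (z - y) 1 w
      rw [one_smul, one_pow, one_mul, add_sub_cancel] at this
      rw [this]; ring
    have := (key y (z - y) k (x + k) (by rw [map_add, h3, h1, add_zero])
      (by rw [hd, map_add, map_add, h4, h2, h3, h1]; ring) h1 (by rw [hd, h2, h1, sub_zero])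
      1 le_rfl (by omega)).2
    rwa [add_sub_cancel] at this
  constructor
  · intro u hu j hj hjq
    obtain ⟨M, k, hMk, hk, -, ⟨x, hx1, hx2⟩, -⟩ := h13_indep (Λ u) (Λ u) ((hiff u).1 hu)
      ((hiff u).1 hu)
    obtain ⟨z, rfl⟩ := hsur M
    exact (key u z k x hx1 hx2 hk hMk j (by omega) hjq).1 hj
  · obtain ⟨u0, hu0⟩ := hsur (LinearMap.proj 0)
    have hu0' : u0 ∉ W := by
      apply hΛ0 _ (Pi.single 0 1)
      rw [hu0]; simp
    refine ⟨(G u0).coeff 1, ?_⟩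
    intro u hu
    obtain ⟨M, k, hMk, hk1, hk2, hx1, hx2⟩ := h13_indep (Λ u) (Λ u0) ((hiff u).1 hu)
      ((hiff u0).1 hu0')
    obtain ⟨z, rfl⟩ := hsur M
    rw [← conn u z k hk1 hMk hx1, conn u0 z k hk2 hMk hx2]


theorem h13_end {F : Type} [Field F] [Fintype F] (q : ℕ) (hq : 3 ≤ q) (hq0 : (q : F) = 0)
    (hcard : Fintype.card F = q ^ 2) (φ : F →+* F) (hφ : ∀ x, φ x = x ^ q)
    (hφφ : ∀ x, φ (φ x) = x)
    (f : MvPolynomial (Fin 7) F) (hf : f.IsHomogeneous (q + 1))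
    (W : Submodule F (Fin 7 → F)) (hW : Module.finrank F W = 4)
    (hno : ∀ U : Submodule F (Fin 7 → F), Module.finrank F U = 4 →
      ∃ v ∈ U, MvPolynomial.eval v f ≠ 0)
    (hWc : Nat.card {v // v ∈ W ∧ MvPolynomial.eval v f = 0} = q ^ 6)
    (hZc : Nat.card {v // v ∉ W ∧ MvPolynomial.eval v f = 0} + q ^ 7 = q ^ 13) :
    ∃ (e : F) (η : (Fin 7 → F) → (Fin 7 → F) → F), e ≠ 0 ∧ IsHermitianForm q η ∧
      (∀ v, η v v = e * MvPolynomial.eval v f) ∧ ∀ v, (∀ w, η v w = 0) → v = 0 := by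
  have hcq : q + 1 + 1 < Fintype.card F := by rw [hcard]; nlinarith
  obtain ⟨B, hBW, hB0, hBs, hG⟩ := h13_L6 q hq hq0 hcard
    (fun κ => ⟨φ κ, by rw [← hφ, hφφ]⟩) f hf W hW hno hWc hZc
  obtain ⟨Λ, hΛ, hsur, hiff, hGG⟩ := h13_L7 q hq hcard φ hφ hφφ f hf W hW B hG
  choose! G hdeg hmon hrts hev hco using hGG
  obtain ⟨hmid, c, hc⟩ := h13_L8 q hq hcard f hf W B Λ hΛ hsur hiff G hco
  have hG0 : ∀ u, u ∉ W → (G u).coeff 0 = MvPolynomial.eval u f := by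
    intro u hu
    have := hco u hu 0 0
    rw [h13_lin_coeff_zero] at this
    simpa using this.symm
  have hGe : ∀ u, u ∉ W → G u = Polynomial.X ^ q + Polynomial.C c * Polynomial.X
      + Polynomial.C (MvPolynomial.eval u f) := by
    intro u hu
    ext j
    simp only [Polynomial.coeff_add, Polynomial.coeff_X_pow, Polynomial.coeff_C_mul,
      Polynomial.coeff_X, Polynomial.coeff_C]
    rcases Nat.lt_trichotomy j q with h | h | h
    · rcases (by omega : j = 0 ∨ j = 1 ∨ 2 ≤ j) with rfl | rfl | h2
      · rw [hG0 u hu, if_neg (by omega)]; simp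
      · rw [hc u hu, if_neg (by omega)]; simp
      · rw [hmid u hu j h2 h, if_neg (by omega), if_neg (by omega), if_neg (by omega)]; simp
    · subst h
      have := hmon u hu
      rw [Polynomial.Monic, Polynomial.leadingCoeff, hdeg u hu] at this
      rw [this, if_pos rfl, if_neg (by omega), if_neg (by omega)]; simp
    · rw [Polynomial.coeff_eq_zero_of_natDegree_lt (by rw [hdeg u hu]; exact h),
        if_neg (by omega), if_neg (by omega), if_neg (by omega)]; simp
  have hGev : ∀ u, u ∉ W → ∀ s, (G u).eval s = φ s + c * s + MvPolynomial.eval u f := by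
    intro u hu s
    rw [hGe u hu, hφ]; simp
  obtain ⟨z0, hz0⟩ : ∃ z, z ∉ W := by
    by_contra! h
    have : W = ⊤ := by ext x; simp [h x]
    rw [this] at hW
    simp at hW
  obtain ⟨w, hw, hwc⟩ : ∃ w, w ≠ 0 ∧ φ w + c * w = 0 := by
    obtain ⟨s, t, hst, h1, h2⟩ := hrts z0 hz0
    rw [hGev z0 hz0] at h1 h2
    refine ⟨s - t, sub_ne_zero.mpr hst, ?_⟩
    rw [map_sub]
    linear_combination h1 - h2
  obtain ⟨t0, ht0⟩ : ∃ t0, φ t0 ≠ t0 := by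
    by_contra! h
    have := h13_poly_eq (Polynomial.X ^ q : Polynomial F) Polynomial.X (q + 1) hcq
      (by simp) (by simp) (fun s _ => by
        have := h s
        rw [hφ] at this
        simpa using this)
    have := congrArg Polynomial.natDegree this
    simp at this
    omega
  have hφw : φ w ≠ 0 := by simpa using hw
  set ε := φ t0 - t0 with hε
  have hεφ : φ ε = -ε := by rw [hε, map_sub, hφφ]; ring
  have hε0 : ε ≠ 0 := sub_ne_zero.mpr ht0
  set e := ε / φ w with he
  have he0 : e ≠ 0 := div_ne_zero hε0 hφw
  have hcw : c = - φ w / w := by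
    field_simp
    linear_combination hwc
  have hfix : ∀ z, φ (e * (φ z + c * z)) = e * (φ z + c * z) := by
    intro z
    have h1 : e * (φ z + c * z) = ε * (φ (z / w) - z / w) := by
      rw [he, hcw, map_div₀]
      field_simp
      ring
    rw [h1, map_mul, hεφ, map_sub, hφφ]
    ring
  have hfix1 : ∀ u, u ∉ W → φ (e * MvPolynomial.eval u f) = e * MvPolynomial.eval u f := by
    intro u hu
    obtain ⟨s, t, hst, h1, h2⟩ := hrts u hu
    rw [hGev u hu] at h1
    have h3 : e * MvPolynomial.eval u f = -(e * (φ s + c * s)) := by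
      linear_combination e * h1
    rw [h3, map_neg, hfix]
  have hfix2 : ∀ u, φ (e * MvPolynomial.eval u f) = e * MvPolynomial.eval u f := by
    intro u
    by_cases hu : u ∈ W
    · have hK := (h13_K hq hcard φ hφ (Polynomial.C e * h13_lin f u z0)
        ((Polynomial.natDegree_C_mul_le _ _).trans (h13_lin_natDegree f u z0 _ hf.totalDegree_le))
        (fun s hs => by
          rw [Polynomial.eval_mul, Polynomial.eval_C, h13_lin_eval]
          apply hfix1
          intro h
          apply hz0
          have h2 := (Submodule.add_mem_iff_right W hu).mp h
          exact (Submodule.smul_mem_iff W hs).mp h2)).1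
      rwa [Polynomial.coeff_C_mul, h13_lin_coeff_zero] at hK
    · exact hfix1 u hu
  obtain ⟨η, hη, hdiag⟩ := h13_herm hq hq0 hcard φ hφ f hf e hfix2
  refine ⟨e, η, he0, hη, hdiag, ?_⟩
  intro r hr
  by_contra hr0
  obtain ⟨a1, a2, a3, a4⟩ := hη
  have hr' : ∀ v, η v r = 0 := by
    intro v
    rw [a4 r v, hr v, zero_pow (by omega)]
  have htr : ∀ u (s : F), MvPolynomial.eval (u + s • r) f = MvPolynomial.eval u f := by
    intro u s
    have h0 : ∀ v, η v (s • r) = 0 := by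
      intro v
      rw [a4 (s • r) v, a3, hr v, mul_zero, zero_pow (by omega)]
    have h1 : η (u + s • r) (u + s • r) = η u u := by
      rw [a2, h0, a1, a3, hr]; simp
    rw [hdiag, hdiag] at h1
    exact mul_left_cancel₀ he0 h1
  by_cases hrW : r ∈ W
  · have hfr : MvPolynomial.eval r f = 0 := by
      have h1 := hdiag r
      rw [hr] at h1
      exact (mul_eq_zero.mp h1.symm).resolve_left he0
    obtain ⟨x, rfl⟩ := hBs r hrW hfr
    have hx : x ≠ 0 := by rintro rfl; simp at hr0
    obtain ⟨i, hi⟩ := Function.ne_iff.mp hx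
    obtain ⟨z, hz⟩ := hsur ((x i)⁻¹ • LinearMap.proj i)
    have hzx : Λ z x = 1 := by
      rw [hz]
      simpa using inv_mul_cancel₀ hi
    have hzW : z ∉ W := by
      rw [hiff]
      intro h
      rw [h] at hzx
      simp at hzx
    have h1 := h13_poly_eq (h13_lin f z (B x)) (Polynomial.C (MvPolynomial.eval z f)) (q + 1) hcq
      (h13_lin_natDegree f z _ _ hf.totalDegree_le) (by simp) (fun s _ => by
        rw [h13_lin_eval, htr, Polynomial.eval_C])
    have h2 := hco z hzW x q
    have h3 := hmon z hzW
    rw [Polynomial.Monic, Polynomial.leadingCoeff, hdeg z hzW] at h3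
    rw [h1, h3, hzx, Polynomial.coeff_C, if_neg (by omega)] at h2
    simp at h2
  · have hsj := LinearMap.surjective ((hiff r).mp hrW)
    have hz : ∀ s, (G r).eval s = 0 := by
      intro s
      obtain ⟨x, rfl⟩ := hsj s
      rw [← hev r hrW, add_comm]
      have := htr (B x) 1
      rw [one_smul] at this
      rw [this, hB0]
    have h1 := h13_poly_eq (G r) 0 (q + 1) hcq (by rw [hdeg r hrW]; omega) (by simp)
      (fun s _ => by rw [hz]; simp)
    exact (hmon r hrW).ne_zero h1

/-- Under the hypotheses of the main theorem, every hyperplane of `PG(6,q²)` meets `S`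
either in a non-singular Hermitian variety `H(5,q²)` (radical of dimension `0`) or in a
Hermitian cone with vertex a point over a non-singular Hermitian variety `H(4,q²)`
(radical of dimension `1`). -/
theorem stmt_13 (q : ℕ) (hq : ∃ p k : ℕ, p.Prime ∧ 0 < k ∧ q = p ^ k) (hq2 : 2 < q)
    (F : Type) [Field F] [Fintype F] (hcardF : Fintype.card F = q ^ 2)
    (f : MvPolynomial (Fin 7) F) (hf0 : f ≠ 0) (hfdeg : f.IsHomogeneous (q + 1))
    (S : Set (Projectivization F (Fin 7 → F))) (hS : S = hypersurfacePts f)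
    (hnosolid : ¬ ∃ W : Submodule F (Fin 7 → F), Module.finrank F W = 4 ∧ projPts W ⊆ S)
    (hcardS : S.ncard = q ^ 11 + q ^ 9 + q ^ 7 + q ^ 4 + q ^ 2 + 1)
    (hsolid : ∃ W : Submodule F (Fin 7 → F), Module.finrank F W = 4 ∧
      (S ∩ projPts W).ncard = q ^ 4 + q ^ 2 + 1) :
    ∀ H : Submodule F (Fin 7 → F), Module.finrank F H = 6 →
      IsHermitianConeOn q H 0 (S ∩ projPts H) ∨
      IsHermitianConeOn q H 1 (S ∩ projPts H) := by
  subst hS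
  have hq3 : 3 ≤ q := hq2
  obtain ⟨hq0, φ, hφ, hφφ⟩ := h13_frob hq hcardF
  obtain ⟨W, hW, hWn⟩ := hsolid
  obtain ⟨m, hm⟩ : ∃ m, q ^ 2 = m + 1 := ⟨q ^ 2 - 1, by
    have : 0 < q ^ 2 := by positivity
    omega⟩
  have hWc : Nat.card {v // v ∈ W ∧ MvPolynomial.eval v f = 0} = q ^ 6 := by
    rw [h13_count f hfdeg (by omega) W, hWn, hcardF,
      show q ^ 6 = (q ^ 2) ^ 3 by ring, show q ^ 4 = (q ^ 2) ^ 2 by ring, hm, Nat.add_sub_cancel]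
    ring
  have htop : Nat.card {v // v ∈ (⊤ : Submodule F (Fin 7 → F)) ∧ MvPolynomial.eval v f = 0} + q ^ 7
      = q ^ 13 + q ^ 6 := by
    have h1 : hypersurfacePts f ∩ projPts (⊤ : Submodule F (Fin 7 → F)) = hypersurfacePts f := by
      ext P
      simp [projPts]
    rw [h13_count f hfdeg (by omega) ⊤, h1, hcardS, hcardF,
      show q ^ 6 = (q ^ 2) ^ 3 by ring, show q ^ 4 = (q ^ 2) ^ 2 by ring,
      show q ^ 11 = q * (q ^ 2) ^ 5 by ring, show q ^ 9 = q * (q ^ 2) ^ 4 by ring,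
      show q ^ 7 = q * (q ^ 2) ^ 3 by ring, show q ^ 13 = q * (q ^ 2) ^ 6 by ring,
      hm, Nat.add_sub_cancel]
    ring
  have hsplit : Nat.card {v // v ∈ (⊤ : Submodule F (Fin 7 → F)) ∧ MvPolynomial.eval v f = 0} =
      Nat.card {v // v ∈ W ∧ MvPolynomial.eval v f = 0} +
      Nat.card {v // v ∉ W ∧ MvPolynomial.eval v f = 0} := by
    classical
    simp only [Nat.card_eq_fintype_card, Fintype.card_subtype, Submodule.mem_top, true_and]
    rw [← Finset.card_filter_add_card_filter_not (fun v => v ∈ W), Finset.filter_filter,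
      Finset.filter_filter]
    simp only [and_comm]
  have hZc : Nat.card {v // v ∉ W ∧ MvPolynomial.eval v f = 0} + q ^ 7 = q ^ 13 := by
    omega
  have hno : ∀ U : Submodule F (Fin 7 → F), Module.finrank F U = 4 →
      ∃ v ∈ U, MvPolynomial.eval v f ≠ 0 := by
    intro U hU
    by_contra! h
    refine hnosolid ⟨U, hU, ?_⟩
    intro P hP
    refine h P.rep (hP ?_)
    rw [Projectivization.submodule_eq]
    exact Submodule.mem_span_singleton_self _
  obtain ⟨e, η, he, hη, hdiag, hnd⟩ := h13_end q hq3 hq0 hcardF φ hφ hφφ f hfdeg W hW hno hWc hZc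
  intro H hH
  exact h13_final hq3 f e he η hη hdiag hnd H hH
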